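/- Let L > 0. There exists a constant C > 0 such that for every z₀ ∈ H³(0,L) with z₀(0) = z₀(L) = z₀′(L) = 0, every T > 0, and every classical solution z of the linearized KdV system on [0,T] with z(0,·) = z₀, one has ‖z(t,·)‖_{H₀¹(0,L)} ≤ C ‖z₀‖_{H₀¹(0,L)} for all t ∈ [0,T]. -/

import Mathlib

open Set Real MeasureTheory

/-- The `L²(0,L)` norm of a function on `(0,L)`. -/
noncomputable def L2norm (L : ℝ) (f : ℝ → ℝ) : ℝ :=
  Real.sqrt (∫ x in (0:ℝ)..L, (f x) ^ 2)

/-- The `H¹(0,L)` (hence `H₀¹(0,L)`) norm of a function on `(0,L)`, the derivative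
being taken within `[0,L]`. -/
noncomputable def H1norm (L : ℝ) (f : ℝ → ℝ) : ℝ :=
  Real.sqrt (∫ x in (0:ℝ)..L, ((f x) ^ 2 + (derivWithin f (Icc (0:ℝ) L) x) ^ 2))

/-- A classical solution of the linearized KdV system
`z_t + z_x + z_xxx = 0`, `z(t,0) = z(t,L) = z_x(t,L) = 0`, on `[0,T] × [0,L]`. -/
def IsLinearKdVSol (L T : ℝ) (z : ℝ → ℝ → ℝ) : Prop :=
  (∀ t ∈ Icc (0:ℝ) T, ContDiffOn ℝ 3 (z t) (Icc (0:ℝ) L)) ∧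
  (∀ x ∈ Icc (0:ℝ) L, ContDiffOn ℝ 1 (fun s => z s x) (Icc (0:ℝ) T)) ∧
  ContinuousOn (fun p : ℝ × ℝ => z p.1 p.2) (Icc (0:ℝ) T ×ˢ Icc (0:ℝ) L) ∧
  (∀ t ∈ Ioo (0:ℝ) T, ∀ x ∈ Ioo (0:ℝ) L,
    derivWithin (fun s => z s x) (Icc (0:ℝ) T) t
      + derivWithin (z t) (Icc (0:ℝ) L) x
      + iteratedDerivWithin 3 (z t) (Icc (0:ℝ) L) x = 0) ∧
  (∀ t ∈ Icc (0:ℝ) T,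
    z t 0 = 0 ∧ z t L = 0 ∧ derivWithin (z t) (Icc (0:ℝ) L) L = 0)

open Filter Topology
open scoped ENNReal

/-!
The energy `∫ u²` decays, but the natural first order energy `∫ u₁²` (with `u₁ = u_x`) is not
dissipated: its time derivative contains the uncontrolled boundary term `u_xx(L)²`. Since `u`
vanishes to second order at `L`, one may add `2 ∫ u² / (L - x)²`, whose derivative contains exactly
`-u_xx(L)²` up to lower order terms, and `6 ∫ x u²`, whose derivative contains `-9 ∫ u₁²` (Kato
smoothing). The resulting functional `Q` is equivalent to the `H¹` energy and satisfies
`Q' ≤ 2 (K ∫ u² - Q)`, so that `Q(t) ≤ max (Q(0), K ∫ u(0)²)` for all times.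

A classical solution is regular in `t` and `x` only separately, so `Q` need not be differentiable
in time. It is a nonnegative quadratic functional, hence convex, and its increments are at most
twice the pairing of its gradient with the increments of `u`; this bounds the upper left Dini
derivative wherever `u_t` is locally bounded in `L²`. That local boundedness holds by a Baire
category argument: `‖u_t‖²` is lower semicontinuous in time, hence bounded near some point of any
nonempty locally closed set of times, and `L²` contraction applied to time translates propagates
the bound forward.
-/

namespace LinearKdV

/-! ### Bounded sequences in `L²` -/

section Lp

variable {α ι : Type*} [MeasurableSpace α] {μ : Measure α} {l : Filter ι}

lemma eLpNorm_two_eq_ofReal_sqrt {f : α → ℝ} (hf : MemLp f 2 μ) :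
    eLpNorm f 2 μ = ENNReal.ofReal √(∫ x, f x ^ 2 ∂μ) := by
  rw [hf.eLpNorm_eq_integral_rpow_norm two_ne_zero ENNReal.ofNat_ne_top, sqrt_eq_rpow]
  simp

lemma integral_sq_le_of_tendsto_ae [NeBot l] [l.IsCountablyGenerated] {w : ι → α → ℝ} {v : α → ℝ}
    {K : ℝ} (hw : ∀ᶠ i in l, MemLp (w i) 2 μ) (hK : ∀ᶠ i in l, ∫ x, w i x ^ 2 ∂μ ≤ K)
    (hlim : ∀ᵐ x ∂μ, Tendsto (fun i ↦ w i x) l (𝓝 (v x))) :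
    MemLp v 2 μ ∧ ∫ x, v x ^ 2 ∂μ ≤ K := by
  obtain ⟨i, hi, hwK⟩ := exists_seq_forall_of_frequently (hw.and hK).frequently
  have hlim' : ∀ᵐ x ∂μ, Tendsto (fun n ↦ w (i n) x) atTop (𝓝 (v x)) :=
    hlim.mono fun x hx ↦ hx.comp hi
  have hv_le : eLpNorm v 2 μ ≤ ENNReal.ofReal √K :=
    Lp.eLpNorm_le_of_ae_tendsto (.of_forall fun n ↦ by
      rw [eLpNorm_two_eq_ofReal_sqrt (hwK n).1]
      gcongr
      exact (hwK n).2) (fun n ↦ (hwK n).1.1) hlim'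
  have hv : MemLp v 2 μ := ⟨aestronglyMeasurable_of_tendsto_ae _ (fun n ↦ (hwK n).1.1) hlim',
    hv_le.trans_lt ENNReal.ofReal_lt_top⟩
  have hK0 : 0 ≤ K := (integral_nonneg fun x ↦ sq_nonneg (w (i 0) x)).trans (hwK 0).2
  rw [eLpNorm_two_eq_ofReal_sqrt hv, ENNReal.ofReal_le_ofReal_iff (sqrt_nonneg K),
    sqrt_le_sqrt_iff hK0] at hv_le
  exact ⟨hv, hv_le⟩

lemma unifIntegrable_mul_of_integral_sq_le {w : ι → α → ℝ} {g : α → ℝ} {M : ℝ}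
    (hg : MemLp g 2 μ) (hw : ∀ i, MemLp (w i) 2 μ) (hM : ∀ i, ∫ x, w i x ^ 2 ∂μ ≤ M) :
    UnifIntegrable (fun i ↦ g * w i) 1 μ := by
  intro ε hε
  have hM1 : 0 < √M + 1 := by positivity
  obtain ⟨δ, hδ, hgδ⟩ := unifIntegrable_const (ι := Unit) one_le_two ENNReal.ofNat_ne_top hg
    (div_pos hε hM1)
  refine ⟨δ, hδ, fun i s hs hsδ ↦ ?_⟩
  calc eLpNorm (s.indicator (g * w i)) 1 μ
      = eLpNorm (s.indicator g • w i) 1 μ := by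
        congr 1 with x
        exact indicator_mul_left s g (w i)
    _ ≤ eLpNorm (s.indicator g) 2 μ * eLpNorm (w i) 2 μ :=
        eLpNorm_smul_le_mul_eLpNorm (hw i).1 (hg.1.indicator hs)
    _ ≤ ENNReal.ofReal (ε / (√M + 1)) * ENNReal.ofReal (√M + 1) := by
        gcongr
        · exact hgδ () s hs hsδ
        · rw [eLpNorm_two_eq_ofReal_sqrt (hw i)]
          gcongr
          exact (sqrt_le_sqrt (hM i)).trans (by linarith)
    _ = ENNReal.ofReal ε := by
        rw [← ENNReal.ofReal_mul (by positivity), div_mul_cancel₀ _ hM1.ne']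

lemma tendsto_integral_mul_of_integral_sq_le [IsFiniteMeasure μ] [l.IsCountablyGenerated]
    {w : ι → α → ℝ} {g v : α → ℝ} {M : ℝ} (hg : MemLp g 2 μ)
    (hw : ∀ᶠ i in l, MemLp (w i) 2 μ) (hM : ∀ᶠ i in l, ∫ x, w i x ^ 2 ∂μ ≤ M)
    (hlim : ∀ᵐ x ∂μ, Tendsto (fun i ↦ w i x) l (𝓝 (v x))) :
    Tendsto (fun i ↦ ∫ x, g x * w i x ∂μ) l (𝓝 (∫ x, g x * v x ∂μ)) := by
  refine tendsto_of_seq_tendsto fun i hi ↦ ?_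
  obtain ⟨N, hN⟩ := eventually_atTop.1 (hi.eventually (hw.and hM))
  rw [← tendsto_add_atTop_iff_nat N]
  have hwN (n : ℕ) : MemLp (w (i (n + N))) 2 μ := (hN _ (Nat.le_add_left N n)).1
  have hMN (n : ℕ) : ∫ x, w (i (n + N)) x ^ 2 ∂μ ≤ M := (hN _ (Nat.le_add_left N n)).2
  have hlimN : ∀ᵐ x ∂μ, Tendsto (fun n ↦ w (i (n + N)) x) atTop (𝓝 (v x)) :=
    hlim.mono fun x hx ↦ hx.comp (hi.comp (tendsto_add_atTop_nat N))
  have hv : MemLp v 2 μ :=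
    (integral_sq_le_of_tendsto_ae (.of_forall hwN) (.of_forall hMN) hlimN).1
  have hgv : Integrable (g * v) μ := hg.integrable_mul hv
  refine tendsto_integral_of_L1' (g * v) hgv.1
    (.of_forall fun n ↦ hg.integrable_mul (hwN n)) ?_
  exact tendsto_Lp_finite_of_tendsto_ae le_rfl ENNReal.one_ne_top
    (fun n ↦ (hg.integrable_mul (hwN n)).1) (memLp_one_iff_integrable.2 hgv)
    (unifIntegrable_mul_of_integral_sq_le hg hwN hMN)
    (hlimN.mono fun x hx ↦ hx.const_mul (g x))

end Lp

/-! ### Calculus on an interval -/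

section Interval

variable {a b : ℝ} {f f' φ : ℝ → ℝ}

lemma integrableOn_Ioo_of_continuousOn (hf : ContinuousOn f (Icc a b)) : IntegrableOn f (Ioo a b) :=
  hf.integrableOn_Icc.mono_set Ioo_subset_Icc_self

lemma memLp_Ioo_of_continuousOn {p : ℝ≥0∞} (hf : ContinuousOn f (Icc a b)) :
    MemLp f p (volume.restrict (Ioo a b)) := by
  obtain ⟨C, hC⟩ := isCompact_Icc.exists_bound_of_continuousOn hf
  exact .of_bound (integrableOn_Ioo_of_continuousOn hf).1 C
    (ae_restrict_of_forall_mem measurableSet_Ioo fun x hx ↦ hC x (Ioo_subset_Icc_self hx))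

lemma integral_Ioo_eq_sub (hab : a ≤ b) (hf : ContinuousOn f (Icc a b))
    (hderiv : ∀ x ∈ Ioo a b, HasDerivAt f (f' x) x) (hint : IntegrableOn f' (Ioo a b)) :
    ∫ x in Ioo a b, f' x = f b - f a := by
  rw [← integral_Ioc_eq_integral_Ioo, ← intervalIntegral.integral_of_le hab]
  exact intervalIntegral.integral_eq_sub_of_hasDerivAt_of_le hab hf hderiv
    ((intervalIntegrable_iff_integrableOn_Ioo_of_le hab).2 hint)

lemma sub_le_integral_Ioo (hab : a ≤ b) (hf : ContinuousOn f (Icc a b))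
    (hderiv : ∀ x ∈ Ioo a b, HasDerivAt f (f' x) x) (hint : IntegrableOn φ (Ioo a b))
    (hle : ∀ x ∈ Ioo a b, f' x ≤ φ x) : f b - f a ≤ ∫ x in Ioo a b, φ x := by
  rw [← integral_Ioc_eq_integral_Ioo, ← intervalIntegral.integral_of_le hab]
  exact intervalIntegral.sub_le_integral_of_hasDeriv_right_of_le hab hf
    (fun x hx ↦ (hderiv x hx).hasDerivWithinAt) ((integrableOn_Icc_iff_integrableOn_Ioo).2 hint) hle

lemma abs_sub_le_of_integral_sq_le {N x y : ℝ} (hf : ContinuousOn f (Icc a b))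
    (hderiv : ∀ x ∈ Ioo a b, HasDerivAt f (f' x) x) (hf' : ContinuousOn f' (Icc a b))
    (hN : ∫ x in Ioo a b, f' x ^ 2 ≤ N) (hx : x ∈ Icc a b) (hy : y ∈ Icc a b) :
    |f y - f x| ≤ b - a + N := by
  wlog hxy : x ≤ y
  · rw [abs_sub_comm]
    exact this hf hderiv hf' hN hy hx (le_of_not_ge hxy)
  have hIoo : Ioo x y ⊆ Ioo a b := Ioo_subset_Ioo hx.1 hy.2
  have hIcc : Icc x y ⊆ Icc a b := Icc_subset_Icc hx.1 hy.2
  have hint : IntegrableOn (fun x ↦ 1 + f' x ^ 2) (Ioo a b) :=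
    integrableOn_Ioo_of_continuousOn (by fun_prop)
  have hle : ∫ x in Ioo x y, (1 + f' x ^ 2) ≤ b - a + N := by
    refine (setIntegral_mono_set hint (.of_forall fun x ↦ by positivity)
      hIoo.eventuallyLE).trans ?_
    rw [integral_add (by simp) (integrableOn_Ioo_of_continuousOn (by fun_prop))]
    simpa [hx.1.trans hx.2] using hN
  have hint' := hint.mono_set hIoo
  refine abs_sub_le_iff.2 ⟨?_, ?_⟩
  · exact (sub_le_integral_Ioo hxy (hf.mono hIcc) (fun z hz ↦ hderiv z (hIoo hz)) hint'
      fun z _ ↦ by nlinarith [sq_nonneg (f' z - 1)]).trans hle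
  · have hneg := sub_le_integral_Ioo hxy (hf.mono hIcc).neg
      (fun z hz ↦ (hderiv z (hIoo hz)).neg) hint' fun z _ ↦ by nlinarith [sq_nonneg (f' z + 1)]
    simp only [Pi.neg_apply, neg_sub_neg] at hneg
    exact hneg.trans hle

lemma hasDerivAt_of_eq_pow_mul {q r : ℝ → ℝ} {n : ℕ} {x : ℝ} (hx : x ∈ Ioo a b)
    (hderiv : HasDerivAt f ((b - x) ^ n * q x) x)
    (hr : ∀ y ∈ Icc a b, f y = (b - y) ^ (n + 1) * r y) :
    HasDerivAt r ((q x + (n + 1) * r x) / (b - x)) x := by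
  have hbx : b - x ≠ 0 := (sub_pos.2 hx.2).ne'
  have hpow : HasDerivAt (fun y ↦ (b - y) ^ (n + 1)) (-((n + 1) * (b - x) ^ n)) x := by
    simpa using ((hasDerivAt_id x).const_sub b).fun_pow (n + 1)
  refine ((hderiv.fun_div hpow (pow_ne_zero _ hbx)).congr_of_eventuallyEq ?_).congr_deriv ?_
  · filter_upwards [Ioo_mem_nhds hx.1 hx.2] with y hy
    rw [hr y (Ioo_subset_Icc_self hy), mul_div_cancel_left₀ _
      (pow_ne_zero _ (sub_pos.2 hy.2).ne')]
  · rw [hr x (Ioo_subset_Icc_self hx)]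
    field_simp
    ring

lemma exists_div_pow_eq (hab : a < b) {q : ℝ → ℝ} {n : ℕ} (hf : ContinuousOn f (Icc a b))
    (hfb : f b = 0) (hderiv : ∀ x ∈ Ioo a b, HasDerivAt f ((b - x) ^ n * q x) x) :
    ∃ ξ ∈ Ioo a b, f a / (b - a) ^ (n + 1) = -q ξ / (n + 1) := by
  obtain ⟨ξ, hξ, h⟩ := exists_ratio_hasDerivAt_eq_ratio_slope f _ hab hf hderiv
    (fun y ↦ (b - y) ^ (n + 1)) (fun y ↦ (n + 1) * (b - y) ^ n * (-1)) (by fun_prop)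
    (fun y _ ↦ by simpa using ((hasDerivAt_id y).const_sub b).fun_pow (n + 1))
  refine ⟨ξ, hξ, (div_eq_div_iff (pow_ne_zero _ (sub_pos.2 hab).ne') (by positivity)).2
    (mul_left_cancel₀ (pow_ne_zero n (sub_pos.2 hξ.2).ne') ?_)⟩
  simp only [hfb, sub_self, ne_eq, Nat.add_eq_zero_iff, one_ne_zero, and_false,
    not_false_eq_true, zero_pow] at h
  linarith

lemma exists_eq_pow_mul (hab : a < b) {q : ℝ → ℝ} (n : ℕ) (hf : ContinuousOn f (Icc a b))
    (hfb : f b = 0) (hderiv : ∀ x ∈ Ioo a b, HasDerivAt f ((b - x) ^ n * q x) x)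
    (hq : ContinuousOn q (Icc a b)) :
    ∃ r : ℝ → ℝ, ContinuousOn r (Icc a b) ∧ (∀ x ∈ Icc a b, f x = (b - x) ^ (n + 1) * r x) ∧
      ∀ x ∈ Icc a b, ∃ ξ ∈ Icc x b, r x = -q ξ / (n + 1) := by
  have hpow (x : ℝ) (hx : x ∈ Ico a b) : (b - x) ^ (n + 1) ≠ 0 :=
    pow_ne_zero _ (sub_pos.2 hx.2).ne'
  have hmean (x : ℝ) (hx : x ∈ Ico a b) :
      ∃ ξ ∈ Ioo x b, f x / (b - x) ^ (n + 1) = -q ξ / (n + 1) :=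
    exists_div_pow_eq hx.2 (hf.mono (Icc_subset_Icc_left hx.1)) hfb
      fun y hy ↦ hderiv y (Ioo_subset_Ioo_left hx.1 hy)
  refine ⟨Function.update (fun x ↦ f x / (b - x) ^ (n + 1)) b (-q b / (n + 1)), ?_, ?_, ?_⟩
  · rw [continuousOn_update_iff, Icc_sdiff_right]
    refine ⟨(hf.mono Ico_subset_Icc_self).div (by fun_prop) hpow, fun _ ↦ ?_⟩
    choose! ξ hξ h using hmean
    have hξ_lim : Tendsto ξ (𝓝[Ico a b] b) (𝓝[Icc a b] b) := by
      refine tendsto_nhdsWithin_iff.2 ⟨tendsto_of_tendsto_of_tendsto_of_le_of_le'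
        (tendsto_nhdsWithin_of_tendsto_nhds tendsto_id) tendsto_const_nhds
        (eventually_mem_nhdsWithin.mono fun x hx ↦ (hξ x hx).1.le)
        (eventually_mem_nhdsWithin.mono fun x hx ↦ (hξ x hx).2.le),
        eventually_mem_nhdsWithin.mono fun x hx ↦ ⟨hx.1.trans (hξ x hx).1.le, (hξ x hx).2.le⟩⟩
    exact (((hq b (right_mem_Icc.2 hab.le)).tendsto.comp hξ_lim).neg.div_const _).congr'
      (eventually_mem_nhdsWithin.mono fun x hx ↦ (h x hx).symm)
  · intro x hx
    obtain rfl | hxb := eq_or_ne x b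
    · simp [hfb]
    · rw [Function.update_of_ne hxb, mul_div_cancel₀ _ (hpow x ⟨hx.1, hx.2.lt_of_ne hxb⟩)]
  · intro x hx
    obtain rfl | hxb := eq_or_ne x b
    · exact ⟨x, by simp⟩
    · obtain ⟨ξ, hξ, h⟩ := hmean x ⟨hx.1, hx.2.lt_of_ne hxb⟩
      exact ⟨ξ, Ioo_subset_Icc_self hξ, by rw [Function.update_of_ne hxb, h]⟩

lemma exists_eq_mul (hab : a < b) (hf : ContinuousOn f (Icc a b)) (hfb : f b = 0)
    (hderiv : ∀ x ∈ Ioo a b, HasDerivAt f (f' x) x) (hf' : ContinuousOn f' (Icc a b)) :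
    ∃ r : ℝ → ℝ, ContinuousOn r (Icc a b) ∧ (∀ x ∈ Icc a b, f x = (b - x) * r x) ∧
      (∀ x ∈ Icc a b, ∃ ξ ∈ Icc x b, r x = -f' ξ) ∧
      ∀ x ∈ Ioo a b, HasDerivAt r ((f' x + r x) / (b - x)) x := by
  obtain ⟨r, hr, hfr, hmean⟩ := exists_eq_pow_mul hab 0 hf hfb (by simpa using hderiv) hf'
  exact ⟨r, hr, by simpa using hfr, by simpa using hmean, fun x hx ↦ by
    simpa using hasDerivAt_of_eq_pow_mul (n := 0) hx (by simpa using hderiv x hx) hfr⟩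

lemma integral_sq_div_le_of_right_eq_zero (hab : a < b) (hf : ContinuousOn f (Icc a b))
    (hfb : f b = 0) (hderiv : ∀ x ∈ Ioo a b, HasDerivAt f (f' x) x)
    (hf' : ContinuousOn f' (Icc a b)) :
    ∫ x in Ioo a b, (f x / (b - x)) ^ 2 ≤ 4 * ∫ x in Ioo a b, f' x ^ 2 := by
  obtain ⟨r, hr, hfr, -, hr'⟩ := exists_eq_mul hab hf hfb hderiv hf'
  have hquot : ∫ x in Ioo a b, (f x / (b - x)) ^ 2 = ∫ x in Ioo a b, r x ^ 2 :=
    setIntegral_congr_fun measurableSet_Ioo fun x hx ↦ by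
      rw [hfr x (Ioo_subset_Icc_self hx), mul_div_cancel_left₀ _ (sub_pos.2 hx.2).ne']
  have hr2 : IntegrableOn (fun x ↦ 1 / 2 * r x ^ 2) (Ioo a b) :=
    integrableOn_Ioo_of_continuousOn (by fun_prop)
  have hf'2 : IntegrableOn (fun x ↦ 2 * f' x ^ 2) (Ioo a b) :=
    integrableOn_Ioo_of_continuousOn (by fun_prop)
  have hftc := sub_le_integral_Ioo hab.le (f := fun x ↦ -((b - x) * r x ^ 2))
    (f' := fun x ↦ -(r x ^ 2 + 2 * (r x * f' x))) (by fun_prop) (fun x hx ↦ by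
      have := (((hasDerivAt_id x).const_sub b).mul ((hr' x hx).pow 2)).neg
      refine this.congr_deriv ?_
      have hbx : b - x ≠ 0 := (sub_pos.2 hx.2).ne'
      simp only [id_eq, Pi.pow_apply]
      field_simp
      ring) (hf'2.sub hr2) (fun x _ ↦ by
      simp only [Pi.sub_apply]
      nlinarith [sq_nonneg (r x + 2 * f' x)])
  simp only [Pi.sub_apply] at hftc
  rw [integral_sub hf'2 hr2, integral_const_mul, integral_const_mul] at hftc
  have : 0 ≤ (b - a) * r a ^ 2 := mul_nonneg (sub_pos.2 hab).le (sq_nonneg _)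
  rw [hquot]
  linarith

lemma hasDerivAt_iteratedDerivWithin_Icc {m n : ℕ} {x : ℝ}
    (hf : ContDiffOn ℝ n f (Icc a b)) (hm : m < n) (hx : x ∈ Ioo a b) :
    HasDerivAt (iteratedDerivWithin m f (Icc a b)) (iteratedDerivWithin (m + 1) f (Icc a b) x)
      x := by
  rw [iteratedDerivWithin_succ]
  exact (hf.differentiableOn_iteratedDerivWithin (mod_cast hm)
    (uniqueDiffOn_Icc (hx.1.trans hx.2)) x (Ioo_subset_Icc_self hx)).hasDerivWithinAt.hasDerivAt
      (Icc_mem_nhds hx.1 hx.2)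

end Interval

/-! ### The Lyapunov functional -/

/-- The spatial regularity and boundary conditions of a classical solution at a fixed time: `u` is
of class `C³` on `[0, L]` with successive derivatives `u₁`, `u₂`, `u₃` (required as derivatives in
the open interval only), and `u 0 = u L = u' L = 0`. -/
structure Profile (L : ℝ) (u u₁ u₂ u₃ : ℝ → ℝ) : Prop where
  cont : ContinuousOn u (Icc 0 L)
  cont₁ : ContinuousOn u₁ (Icc 0 L)
  cont₂ : ContinuousOn u₂ (Icc 0 L)
  cont₃ : ContinuousOn u₃ (Icc 0 L)
  deriv : ∀ x ∈ Ioo 0 L, HasDerivAt u (u₁ x) x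
  deriv₁ : ∀ x ∈ Ioo 0 L, HasDerivAt u₁ (u₂ x) x
  deriv₂ : ∀ x ∈ Ioo 0 L, HasDerivAt u₂ (u₃ x) x
  left_eq_zero : u 0 = 0
  right_eq_zero : u L = 0
  right_deriv_eq_zero : u₁ L = 0

/-- Continuous versions up to `x = L` of the quotients `w = u₁ / (L - x)` and
`v = u / (L - x) ^ 2` of a profile, whose values at `L` are given by Taylor's formula. -/
structure EndpointQuotients (L : ℝ) (u u₁ u₂ w v : ℝ → ℝ) : Prop where
  cont_w : ContinuousOn w (Icc 0 L)
  cont_v : ContinuousOn v (Icc 0 L)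
  eq_w : ∀ x ∈ Icc 0 L, u₁ x = (L - x) * w x
  eq_v : ∀ x ∈ Icc 0 L, u x = (L - x) ^ 2 * v x
  deriv_w : ∀ x ∈ Ioo 0 L, HasDerivAt w ((u₂ x + w x) / (L - x)) x
  deriv_v : ∀ x ∈ Ioo 0 L, HasDerivAt v ((w x + 2 * v x) / (L - x)) x
  mean_w : ∀ x ∈ Icc 0 L, ∃ ξ ∈ Icc x L, w x = -u₂ ξ
  mean_v : ∀ x ∈ Icc 0 L, ∃ ξ ∈ Icc x L, v x = -w ξ / 2

/-- The Lyapunov functional `∫ u₁² + 2 u² / (L - x)² + 6 x u²`, equivalent to the `H¹` energy. -/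
noncomputable def lyapunov (L : ℝ) (u u₁ : ℝ → ℝ) : ℝ :=
  ∫ x in Ioo 0 L, (u₁ x ^ 2 + 2 * (u x / (L - x)) ^ 2 + 6 * (x * u x ^ 2))

/-- Half the `L²` gradient of the quadratic functional `lyapunov`. -/
noncomputable def lyapunovGrad (L : ℝ) (u u₂ : ℝ → ℝ) (x : ℝ) : ℝ :=
  -u₂ x + 2 * (u x / (L - x) ^ 2) + 6 * (x * u x)

namespace EndpointQuotients

variable {L : ℝ} {u u₁ u₂ w v : ℝ → ℝ}

lemma w_right (h : EndpointQuotients L u u₁ u₂ w v) (hL : 0 ≤ L) : w L = -u₂ L := by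
  obtain ⟨ξ, hξ, hw⟩ := h.mean_w L (right_mem_Icc.2 hL)
  obtain rfl : ξ = L := le_antisymm hξ.2 hξ.1
  exact hw

lemma v_right (h : EndpointQuotients L u u₁ u₂ w v) (hL : 0 ≤ L) : v L = u₂ L / 2 := by
  obtain ⟨ξ, hξ, hv⟩ := h.mean_v L (right_mem_Icc.2 hL)
  obtain rfl : ξ = L := le_antisymm hξ.2 hξ.1
  rw [hv, h.w_right hL, neg_neg]

lemma abs_v_le (h : EndpointQuotients L u u₁ u₂ w v) {B : ℝ}
    (hB : ∀ x ∈ Icc 0 L, |u₂ x| ≤ B) {x : ℝ} (hx : x ∈ Icc 0 L) : |v x| ≤ B / 2 := by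
  obtain ⟨ξ, hξ, hv⟩ := h.mean_v x hx
  obtain ⟨η, hη, hw⟩ := h.mean_w ξ ⟨hx.1.trans hξ.1, hξ.2⟩
  rw [hv, hw, neg_neg, abs_div, abs_two]
  gcongr
  exact hB η ⟨hx.1.trans (hξ.1.trans hη.1), hη.2⟩

lemma div_eq (h : EndpointQuotients L u u₁ u₂ w v) {x : ℝ} (hx : x ∈ Ioo 0 L) :
    u x / (L - x) = (L - x) * v x := by
  have : L - x ≠ 0 := (sub_pos.2 hx.2).ne'
  rw [h.eq_v x (Ioo_subset_Icc_self hx)]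
  field_simp

lemma div_sq_eq (h : EndpointQuotients L u u₁ u₂ w v) {x : ℝ} (hx : x ∈ Ioo 0 L) :
    u x / (L - x) ^ 2 = v x := by
  rw [h.eq_v x (Ioo_subset_Icc_self hx), mul_div_cancel_left₀ _ (pow_pos (sub_pos.2 hx.2) 2).ne']

end EndpointQuotients

lemma endpoint_flux_le {L s w v : ℝ} (hs : 0 < s) (hsL : s ≤ L) :
    s * v * (w + 2 * v) - 3 * (w + 2 * v) ^ 2 / s + s ^ 3 * v * w / 8 ≤
      L ^ 3 * (s ^ 2 * v) ^ 2 := by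
  have hcube : s ^ 3 * (s ^ 2 * v) ^ 2 ≤ L ^ 3 * (s ^ 2 * v) ^ 2 := by gcongr
  have hcube0 : 0 ≤ s ^ 3 * (s ^ 2 * v) ^ 2 := by positivity
  have hsq : s * v * (w + 2 * v) - 3 * (w + 2 * v) ^ 2 / s + s ^ 3 * v * w / 8 =
      s ^ 3 * (s ^ 2 * v) ^ 2 / 256 - (w + 2 * v) ^ 2 / s
        - ((w + 2 * v) - s ^ 2 * v / 2) ^ 2 / s
        - ((w + 2 * v) - s ^ 4 * v / 16) ^ 2 / s := by
    field_simp
    ring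
  have h₁ : 0 ≤ (w + 2 * v) ^ 2 / s := by positivity
  have h₂ : 0 ≤ ((w + 2 * v) - s ^ 2 * v / 2) ^ 2 / s := by positivity
  have h₃ : 0 ≤ ((w + 2 * v) - s ^ 4 * v / 16) ^ 2 / s := by positivity
  linarith

namespace Profile

variable {L : ℝ} {u u₁ u₂ u₃ y y₁ y₂ y₃ : ℝ → ℝ}

lemma sub (h : Profile L u u₁ u₂ u₃) (k : Profile L y y₁ y₂ y₃) :
    Profile L (fun x ↦ u x - y x) (fun x ↦ u₁ x - y₁ x) (fun x ↦ u₂ x - y₂ x)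
      (fun x ↦ u₃ x - y₃ x) where
  cont := h.cont.sub k.cont
  cont₁ := h.cont₁.sub k.cont₁
  cont₂ := h.cont₂.sub k.cont₂
  cont₃ := h.cont₃.sub k.cont₃
  deriv x hx := (h.deriv x hx).sub (k.deriv x hx)
  deriv₁ x hx := (h.deriv₁ x hx).sub (k.deriv₁ x hx)
  deriv₂ x hx := (h.deriv₂ x hx).sub (k.deriv₂ x hx)
  left_eq_zero := by simp [h.left_eq_zero, k.left_eq_zero]
  right_eq_zero := by simp [h.right_eq_zero, k.right_eq_zero]
  right_deriv_eq_zero := by simp [h.right_deriv_eq_zero, k.right_deriv_eq_zero]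

lemma exists_endpointQuotients (h : Profile L u u₁ u₂ u₃) (hL : 0 < L) :
    ∃ w v, EndpointQuotients L u u₁ u₂ w v := by
  obtain ⟨w, hw, hu₁w, hw_mean, hw'⟩ :=
    exists_eq_mul hL h.cont₁ h.right_deriv_eq_zero h.deriv₁ h.cont₂
  have hu' (x : ℝ) (hx : x ∈ Ioo 0 L) : HasDerivAt u ((L - x) ^ 1 * w x) x := by
    simpa [hu₁w x (Ioo_subset_Icc_self hx)] using h.deriv x hx
  obtain ⟨v, hv, huv, hv_mean⟩ := exists_eq_pow_mul hL 1 h.cont h.right_eq_zero hu' hw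
  refine ⟨w, v, hw, hv, hu₁w, huv, hw', fun x hx ↦ ?_, hw_mean, fun x hx ↦ ?_⟩
  · refine (hasDerivAt_of_eq_pow_mul hx (hu' x hx) huv).congr_deriv ?_
    norm_num
  · obtain ⟨ξ, hξ, e⟩ := hv_mean x hx
    exact ⟨ξ, hξ, e.trans (by norm_num)⟩

lemma integral_mul_deriv_add_nonneg (h : Profile L u u₁ u₂ u₃) (hL : 0 ≤ L) :
    0 ≤ ∫ x in Ioo 0 L, u x * (u₁ x + u₃ x) := by
  have := h.cont; have := h.cont₁; have := h.cont₂; have := h.cont₃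
  rw [integral_Ioo_eq_sub hL (f := fun x ↦ u x ^ 2 / 2 + u x * u₂ x - u₁ x ^ 2 / 2)
    (by fun_prop) (fun x hx ↦ ?_) (integrableOn_Ioo_of_continuousOn (by fun_prop))]
  · simp only [h.left_eq_zero, h.right_eq_zero, h.right_deriv_eq_zero]
    nlinarith [sq_nonneg (u₁ 0)]
  · refine (((((h.deriv x hx).fun_pow 2).div_const 2).add
      ((h.deriv x hx).fun_mul (h.deriv₂ x hx))).sub
      (((h.deriv₁ x hx).fun_pow 2).div_const 2)).congr_deriv ?_
    simp only [Nat.cast_ofNat]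
    ring

lemma integral_deriv₂_mul_le (h : Profile L u u₁ u₂ u₃) (hL : 0 ≤ L) :
    ∫ x in Ioo 0 L, u₂ x * (u₁ x + u₃ x) ≤ u₂ L ^ 2 / 2 := by
  have := h.cont₁; have := h.cont₂; have := h.cont₃
  rw [integral_Ioo_eq_sub hL (f := fun x ↦ u₂ x ^ 2 / 2 + u₁ x ^ 2 / 2) (by fun_prop)
    (fun x hx ↦ ?_) (integrableOn_Ioo_of_continuousOn (by fun_prop))]
  · rw [h.right_deriv_eq_zero]
    nlinarith [sq_nonneg (u₁ 0), sq_nonneg (u₂ 0)]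
  · refine ((((h.deriv₂ x hx).fun_pow 2).div_const 2).add
      (((h.deriv₁ x hx).fun_pow 2).div_const 2)).congr_deriv ?_
    simp only [Nat.cast_ofNat]
    ring

lemma integral_id_mul_mul_eq (h : Profile L u u₁ u₂ u₃) (hL : 0 ≤ L) :
    ∫ x in Ioo 0 L, x * u x * (u₁ x + u₃ x) =
      3 / 2 * (∫ x in Ioo 0 L, u₁ x ^ 2) - 1 / 2 * ∫ x in Ioo 0 L, u x ^ 2 := by
  have := h.cont; have := h.cont₁; have := h.cont₂; have := h.cont₃
  have hint {f : ℝ → ℝ} (hf : ContinuousOn f (Icc 0 L)) := integrableOn_Ioo_of_continuousOn hf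
  have hftc := integral_Ioo_eq_sub hL
    (f := fun x ↦ x * (u x * u₂ x) - x * (u₁ x ^ 2 / 2) - u x * u₁ x + x * (u x ^ 2 / 2))
    (f' := fun x ↦ x * u x * (u₁ x + u₃ x) - (3 / 2 * u₁ x ^ 2 - 1 / 2 * u x ^ 2))
    (by fun_prop) (fun x hx ↦ ?_) (hint (by fun_prop))
  · rw [integral_sub (hint (by fun_prop)) (hint (by fun_prop)),
      integral_sub (hint (by fun_prop)) (hint (by fun_prop)),
      integral_const_mul, integral_const_mul] at hftc
    simp only [h.left_eq_zero, h.right_eq_zero, h.right_deriv_eq_zero] at hftc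
    linarith
  · refine (((((hasDerivAt_id x).fun_mul ((h.deriv x hx).fun_mul (h.deriv₂ x hx))).sub
      ((hasDerivAt_id x).fun_mul (((h.deriv₁ x hx).fun_pow 2).div_const 2))).sub
      ((h.deriv x hx).fun_mul (h.deriv₁ x hx))).add
      ((hasDerivAt_id x).fun_mul (((h.deriv x hx).fun_pow 2).div_const 2))).congr_deriv ?_
    simp only [id_eq, Nat.cast_ofNat]
    ring

lemma le_integral_div_sq_mul (h : Profile L u u₁ u₂ u₃) (hL : 0 < L) :
    u₂ L ^ 2 / 4 - L ^ 3 * (∫ x in Ioo 0 L, u x ^ 2) ≤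
      ∫ x in Ioo 0 L, u x / (L - x) ^ 2 * (u₁ x + u₃ x) := by
  obtain ⟨w, v, q⟩ := h.exists_endpointQuotients hL
  have := h.cont; have := h.cont₁; have := h.cont₂; have := h.cont₃
  have := q.cont_w; have := q.cont_v
  have hint {f : ℝ → ℝ} (hf : ContinuousOn f (Icc 0 L)) := integrableOn_Ioo_of_continuousOn hf
  have hquot : ∫ x in Ioo 0 L, u x / (L - x) ^ 2 * (u₁ x + u₃ x) =
      ∫ x in Ioo 0 L, v x * (u₁ x + u₃ x) :=
    setIntegral_congr_fun measurableSet_Ioo fun x hx ↦ by rw [q.div_sq_eq hx]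
  -- As `v L = u₂ L / 2` and `w L = -u₂ L`, the primitive below equals `u₂ L ^ 2 / 4` at `L`.
  have hftc := sub_le_integral_Ioo hL.le
    (f := fun x ↦ v x * u₂ x - w x ^ 2 / 2 - 2 * (v x * w x) - 3 * v x ^ 2
      + ((L - x) * v x) ^ 2 + u x ^ 2 / 16)
    (f' := fun x ↦ v x * (u₁ x + u₃ x) + ((L - x) * v x * (w x + 2 * v x)
      - 3 * (w x + 2 * v x) ^ 2 / (L - x) + (L - x) ^ 3 * v x * w x / 8))
    (φ := fun x ↦ v x * (u₁ x + u₃ x) + L ^ 3 * u x ^ 2) (by fun_prop) (fun x hx ↦ ?_)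
    (hint (by fun_prop)) fun x hx ↦ ?_
  · rw [integral_add (hint (by fun_prop)) (hint (by fun_prop)), integral_const_mul] at hftc
    have hv0 : v 0 = 0 := by simpa [h.left_eq_zero, hL.ne'] using q.eq_v 0 (left_mem_Icc.2 hL.le)
    simp only [h.left_eq_zero, h.right_eq_zero, hv0, q.v_right hL.le, q.w_right hL.le] at hftc
    rw [hquot]
    nlinarith [sq_nonneg (w 0)]
  · have dw := q.deriv_w x hx
    have dv := q.deriv_v x hx
    refine ((((((dv.fun_mul (h.deriv₂ x hx)).sub ((dw.fun_pow 2).div_const 2)).sub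
      ((dv.fun_mul dw).const_mul 2)).sub ((dv.fun_pow 2).const_mul 3)).add
      ((((hasDerivAt_id x).const_sub L).fun_mul dv).fun_pow 2)).add
      (((h.deriv x hx).fun_pow 2).div_const 16)).congr_deriv ?_
    have hs : L - x ≠ 0 := (sub_pos.2 hx.2).ne'
    rw [q.eq_v x (Ioo_subset_Icc_self hx), q.eq_w x (Ioo_subset_Icc_self hx)]
    simp only [id_eq, Nat.cast_ofNat]
    field_simp
    ring
  · rw [q.eq_v x (Ioo_subset_Icc_self hx)]
    gcongr
    exact endpoint_flux_le (sub_pos.2 hx.2) (by linarith [hx.1])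

lemma integrableOn_lyapunov (h : Profile L u u₁ u₂ u₃) (hL : 0 < L) :
    IntegrableOn (fun x ↦ u₁ x ^ 2 + 2 * (u x / (L - x)) ^ 2 + 6 * (x * u x ^ 2)) (Ioo 0 L) := by
  obtain ⟨w, v, q⟩ := h.exists_endpointQuotients hL
  have := h.cont; have := h.cont₁; have := q.cont_v
  refine (integrableOn_Ioo_of_continuousOn
    (f := fun x ↦ u₁ x ^ 2 + 2 * ((L - x) * v x) ^ 2 + 6 * (x * u x ^ 2))
    (by fun_prop)).congr_fun (fun x hx ↦ ?_) measurableSet_Ioo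
  simp only [q.div_eq hx]

lemma memLp_lyapunovGrad (h : Profile L u u₁ u₂ u₃) (hL : 0 < L) :
    MemLp (lyapunovGrad L u u₂) 2 (volume.restrict (Ioo 0 L)) := by
  obtain ⟨w, v, q⟩ := h.exists_endpointQuotients hL
  have := h.cont; have := h.cont₂; have := q.cont_v
  refine (memLp_Ioo_of_continuousOn (f := fun x ↦ -u₂ x + 2 * v x + 6 * (x * u x))
    (by fun_prop)).ae_eq ?_
  filter_upwards [ae_restrict_mem measurableSet_Ioo] with x hx
  rw [lyapunovGrad, q.div_sq_eq hx]

lemma integral_deriv_sq_le_lyapunov (h : Profile L u u₁ u₂ u₃) (hL : 0 < L) :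
    ∫ x in Ioo 0 L, u₁ x ^ 2 ≤ lyapunov L u u₁ :=
  setIntegral_mono_on (integrableOn_Ioo_of_continuousOn (h.cont₁.pow 2))
    (h.integrableOn_lyapunov hL) measurableSet_Ioo fun x hx ↦ by
      have := mul_nonneg hx.1.le (sq_nonneg (u x))
      nlinarith [sq_nonneg (u x / (L - x))]

lemma lyapunov_le (h : Profile L u u₁ u₂ u₃) (hL : 0 < L) :
    lyapunov L u u₁ ≤ 9 * (∫ x in Ioo 0 L, u₁ x ^ 2) + 6 * L * ∫ x in Ioo 0 L, u x ^ 2 := by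
  have hardy := integral_sq_div_le_of_right_eq_zero hL h.cont h.right_eq_zero h.deriv h.cont₁
  have := h.cont; have := h.cont₁
  have hint {f : ℝ → ℝ} (hf : ContinuousOn f (Icc 0 L)) := integrableOn_Ioo_of_continuousOn hf
  have hsplit : lyapunov L u u₁ - ∫ x in Ioo 0 L, (u₁ x ^ 2 + 6 * (x * u x ^ 2)) =
      2 * ∫ x in Ioo 0 L, (u x / (L - x)) ^ 2 := by
    rw [lyapunov, ← integral_sub (h.integrableOn_lyapunov hL) (hint (by fun_prop)),
      ← integral_const_mul]
    congr with x
    ring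
  have hreg : ∫ x in Ioo 0 L, (u₁ x ^ 2 + 6 * (x * u x ^ 2)) ≤
      ∫ x in Ioo 0 L, (u₁ x ^ 2 + 6 * L * u x ^ 2) :=
    setIntegral_mono_on (hint (by fun_prop)) (hint (by fun_prop)) measurableSet_Ioo
      fun x hx ↦ by nlinarith [mul_le_mul_of_nonneg_right hx.2.le (sq_nonneg (u x))]
  rw [integral_add (f := fun x ↦ u₁ x ^ 2) (g := fun x ↦ 6 * L * u x ^ 2) (hint (by fun_prop))
    (hint (by fun_prop)), integral_const_mul] at hreg
  linarith

lemma integral_lyapunovGrad_mul_le (h : Profile L u u₁ u₂ u₃) (hL : 0 < L) :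
    ∫ x in Ioo 0 L, lyapunovGrad L u u₂ x * -(u₁ x + u₃ x) ≤
      (3 + 2 * L ^ 3 + 6 * L) * (∫ x in Ioo 0 L, u x ^ 2) - lyapunov L u u₁ := by
  have hsing : IntegrableOn (fun x ↦ 2 * (u x / (L - x) ^ 2 * (u₁ x + u₃ x))) (Ioo 0 L) := by
    obtain ⟨w, v, q⟩ := h.exists_endpointQuotients hL
    have := h.cont₁; have := h.cont₃; have := q.cont_v
    refine (integrableOn_Ioo_of_continuousOn (f := fun x ↦ 2 * (v x * (u₁ x + u₃ x)))
      (by fun_prop)).congr_fun (fun x hx ↦ ?_) measurableSet_Ioo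
    simp only [q.div_sq_eq hx]
  have := h.cont; have := h.cont₁; have := h.cont₂; have := h.cont₃
  have hreg : IntegrableOn (fun x ↦ u₂ x * (u₁ x + u₃ x)) (Ioo 0 L) :=
    integrableOn_Ioo_of_continuousOn (by fun_prop)
  have hweight : IntegrableOn (fun x ↦ 6 * (x * u x * (u₁ x + u₃ x))) (Ioo 0 L) :=
    integrableOn_Ioo_of_continuousOn (by fun_prop)
  have hsplit : ∫ x in Ioo 0 L, lyapunovGrad L u u₂ x * -(u₁ x + u₃ x) =
      (∫ x in Ioo 0 L, u₂ x * (u₁ x + u₃ x))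
        - 2 * (∫ x in Ioo 0 L, u x / (L - x) ^ 2 * (u₁ x + u₃ x))
        - 6 * ∫ x in Ioo 0 L, x * u x * (u₁ x + u₃ x) := by
    rw [← integral_const_mul, ← integral_const_mul, ← integral_sub hreg hsing,
      ← integral_sub (by exact hreg.sub hsing) hweight]
    congr with x
    simp only [lyapunovGrad]
    ring
  rw [hsplit]
  have := h.integral_deriv₂_mul_le hL.le
  have := h.le_integral_div_sq_mul hL
  have := h.integral_id_mul_mul_eq hL.le
  have := h.lyapunov_le hL
  linarith

lemma lyapunov_sub_le (h : Profile L u u₁ u₂ u₃) (k : Profile L y y₁ y₂ y₃) (hL : 0 < L) :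
    lyapunov L u u₁ - lyapunov L y y₁ ≤
      2 * ∫ x in Ioo 0 L, lyapunovGrad L u u₂ x * (u x - y x) := by
  have := h.cont; have := k.cont; have := h.cont₁; have := k.cont₁
  have hgrad : IntegrableOn (fun x ↦ 2 * (lyapunovGrad L u u₂ x * (u x - y x))) (Ioo 0 L) :=
    ((h.memLp_lyapunovGrad hL).integrable_mul (q := 2)
      (memLp_Ioo_of_continuousOn (h.cont.sub k.cont))).const_mul 2
  have hlyap := (h.integrableOn_lyapunov hL).sub (k.integrableOn_lyapunov hL)
  have hftc := sub_le_integral_Ioo hL.le (f := fun x ↦ -(2 * (u₁ x * (u x - y x)))) (by fun_prop)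
    (fun x hx ↦ (((h.deriv₁ x hx).fun_mul ((h.deriv x hx).sub (k.deriv x hx))).const_mul 2).neg)
    (hgrad.sub hlyap) fun x hx ↦ ?_
  · rw [integral_sub' hgrad hlyap, integral_sub' (h.integrableOn_lyapunov hL)
      (k.integrableOn_lyapunov hL), ← lyapunov, ← lyapunov, integral_const_mul, h.left_eq_zero,
      h.right_eq_zero, k.left_eq_zero, k.right_eq_zero] at hftc
    linarith
  · simp only [Pi.sub_apply, lyapunovGrad]
    have hd : 0 ≤ (u₁ x - y₁ x) ^ 2 + 2 * (u x / (L - x) - y x / (L - x)) ^ 2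
        + 6 * (x * (u x - y x) ^ 2) := by
      have := hx.1
      positivity
    have hs : L - x ≠ 0 := (sub_pos.2 hx.2).ne'
    rw [← sub_nonneg]
    convert! hd using 1
    field_simp
    ring

lemma abs_deriv₂_le (h : Profile L u u₁ u₂ u₃) (hL : 0 < L) {U N : ℝ}
    (hU : ∀ x ∈ Icc 0 L, |u x| ≤ U) (hN : ∫ x in Ioo 0 L, (u₁ x + u₃ x) ^ 2 ≤ N) :
    ∀ x ∈ Icc 0 L, |u₂ x| ≤ L + N + 2 * U := by
  intro x hx
  have := h.cont; have := h.cont₂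
  obtain ⟨ξ, hξ, hu₁ξ⟩ := exists_hasDerivAt_eq_zero hL h.cont
    (h.left_eq_zero.trans h.right_eq_zero.symm) h.deriv
  obtain ⟨η, hη, hu₂η⟩ := exists_hasDerivAt_eq_zero hξ.2
    (h.cont₁.mono (Icc_subset_Icc_left hξ.1.le)) (hu₁ξ.trans h.right_deriv_eq_zero.symm)
    fun x hx ↦ h.deriv₁ x ⟨hξ.1.trans hx.1, hx.2⟩
  have hη' : η ∈ Icc 0 L := ⟨(hξ.1.trans hη.1).le, hη.2.le⟩
  have hosc := abs_sub_le_of_integral_sq_le (f := fun x ↦ u x + u₂ x) (by fun_prop)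
    (fun x hx ↦ (h.deriv x hx).add (h.deriv₂ x hx)) (h.cont₁.add h.cont₃) hN hη' hx
  rw [hu₂η] at hosc
  have := abs_le.1 hosc
  have := abs_le.1 (hU x hx)
  have := abs_le.1 (hU η hη')
  rw [abs_le]
  constructor <;> linarith

lemma abs_lyapunovGrad_le (h : Profile L u u₁ u₂ u₃) (hL : 0 < L) {U N : ℝ}
    (hU : ∀ x ∈ Icc 0 L, |u x| ≤ U) (hN : ∫ x in Ioo 0 L, (u₁ x + u₃ x) ^ 2 ≤ N) {x : ℝ}
    (hx : x ∈ Ioo 0 L) : |lyapunovGrad L u u₂ x| ≤ 2 * (L + N + 2 * U) + 6 * (L * U) := by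
  obtain ⟨w, v, q⟩ := h.exists_endpointQuotients hL
  have hx' := Ioo_subset_Icc_self hx
  have hu₂ := h.abs_deriv₂_le hL hU hN
  have hv := q.abs_v_le hu₂ hx'
  have hxu : |x * u x| ≤ L * U := by
    rw [abs_mul, abs_of_pos hx.1]
    exact mul_le_mul hx.2.le (hU x hx') (abs_nonneg _) hL.le
  rw [lyapunovGrad, q.div_sq_eq hx, abs_le]
  have := abs_le.1 (hu₂ x hx')
  have := abs_le.1 hv
  have := abs_le.1 hxu
  constructor <;> linarith

lemma lyapunov_sub_le_mul_integral_abs (h : Profile L u u₁ u₂ u₃) (k : Profile L y y₁ y₂ y₃)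
    (hL : 0 < L) {G : ℝ} (hG : ∀ x ∈ Ioo 0 L, |lyapunovGrad L u u₂ x| ≤ G) :
    lyapunov L u u₁ - lyapunov L y y₁ ≤ 2 * G * ∫ x in Ioo 0 L, |u x - y x| := by
  have hd := h.cont.sub k.cont
  refine (h.lyapunov_sub_le k hL).trans ?_
  rw [mul_assoc, ← integral_const_mul G]
  refine mul_le_mul_of_nonneg_left (setIntegral_mono_on ?_ ?_ measurableSet_Ioo fun x hx ↦ ?_)
    zero_le_two
  · exact (h.memLp_lyapunovGrad hL).integrable_mul (q := 2) (memLp_Ioo_of_continuousOn hd)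
  · exact (integrableOn_Ioo_of_continuousOn hd.abs).const_mul G
  · refine (le_abs_self _).trans ?_
    rw [abs_mul]
    exact mul_le_mul_of_nonneg_right (hG x hx) (abs_nonneg _)

end Profile

/-! ### Dini derivatives and local boundedness -/

section LeftDerivative

variable {ψ ρ : ℝ → ℝ} {C K s t : ℝ}

/-- The upper left Dini derivative of `ψ` at `τ` is at most `K`. -/
def LeftDerivLE (ψ : ℝ → ℝ) (K τ : ℝ) : Prop :=
  ∀ r > K, ∀ᶠ σ in 𝓝[<] τ, ψ τ - ψ σ < r * (τ - σ)

lemma le_of_leftDerivLE_neg (hst : s ≤ t) (hψ : ContinuousOn ψ (Icc s t)) (hs : ψ s ≤ C)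
    (hρ : ∀ τ ∈ Ioo s t, LeftDerivLE ψ (ρ τ) τ) (hneg : ∀ τ ∈ Ioo s t, C < ψ τ → ρ τ < 0) :
    ψ t ≤ C := by
  have hlt (τ : ℝ) (hτ : τ ∈ Ico s t) : ψ τ ≤ C := by
    have hsub : Icc s τ ⊆ Icc s t := Icc_subset_Icc_right hτ.2.le
    obtain ⟨m, hm, hmax⟩ :=
      isCompact_Icc.exists_isMaxOn (nonempty_Icc.2 hτ.1) (hψ.mono hsub)
    refine (hmax (right_mem_Icc.2 hτ.1)).trans (le_of_not_gt fun hC ↦ ?_)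
    have hsm : s < m := hm.1.lt_of_ne (by rintro rfl; exact hs.not_gt hC)
    have hm' : m ∈ Ioo s t := ⟨hsm, hm.2.trans_lt hτ.2⟩
    obtain ⟨σ, hσ, hσs⟩ :=
      ((hρ m hm' 0 (hneg m hm' hC)).and (Ioo_mem_nhdsLT hsm)).exists
    have : ψ σ ≤ ψ m := hmax ⟨hσs.1.le, hσs.2.le.trans hm.2⟩
    linarith
  obtain rfl | hst := hst.eq_or_lt
  · exact hs
  · exact ((hψ t (right_mem_Icc.2 hst.le)).mono Ico_subset_Icc_self).closure_le
      (by rw [closure_Ico hst.ne]; exact right_mem_Icc.2 hst.le) continuousWithinAt_const hlt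

lemma sub_le_mul_sub_of_leftDerivLE (hst : s ≤ t) (hψ : ContinuousOn ψ (Icc s t))
    (hK : ∀ τ ∈ Ioo s t, LeftDerivLE ψ K τ) : ψ t - ψ s ≤ K * (t - s) := by
  have hgt (r : ℝ) (hr : K < r) : ψ t - ψ s ≤ r * (t - s) := by
    have := le_of_leftDerivLE_neg (ψ := fun τ ↦ ψ τ - r * (τ - s)) (ρ := fun _ ↦ K - r) hst
      (by fun_prop) (by simp) (fun τ hτ q hq ↦ ?_) (fun _ _ _ ↦ sub_neg.2 hr) (C := ψ s)
    · linarith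
    · filter_upwards [hK τ hτ (q + r) (by linarith)] with σ hσ
      linarith
  have hlim : Tendsto (fun r ↦ r * (t - s)) (𝓝[>] K) (𝓝 (K * (t - s))) :=
    (Continuous.tendsto (by fun_prop) K).mono_left nhdsWithin_le_nhds
  exact ge_of_tendsto hlim (eventually_mem_nhdsWithin.mono hgt)

-- The `L²` Lipschitz bound makes the difference quotients of `u` converge weakly in `L²`.
lemma leftDerivLE_of_sub_le_integral_mul {α : Type*} [MeasurableSpace α] {μ : Measure α}
    [IsFiniteMeasure μ] {u : ℝ → α → ℝ} {g v : α → ℝ} {c M τ : ℝ} (hg : MemLp g 2 μ)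
    (hu : ∀ᶠ σ in 𝓝[<] τ, MemLp (fun x ↦ u τ x - u σ x) 2 μ)
    (hM : ∀ᶠ σ in 𝓝[<] τ, ∫ x, (u τ x - u σ x) ^ 2 ∂μ ≤ M * (τ - σ) ^ 2)
    (hderiv : ∀ᵐ x ∂μ, HasDerivAt (fun σ ↦ u σ x) (v x) τ)
    (hψ : ∀ᶠ σ in 𝓝[<] τ, ψ τ - ψ σ ≤ c * ∫ x, g x * (u τ x - u σ x) ∂μ) :
    LeftDerivLE ψ (c * ∫ x, g x * v x ∂μ) τ := by
  have hlim : Tendsto (fun σ ↦ ∫ x, g x * ((u τ x - u σ x) / (τ - σ)) ∂μ) (𝓝[<] τ)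
      (𝓝 (∫ x, g x * v x ∂μ)) := by
    refine tendsto_integral_mul_of_integral_sq_le (M := M) hg ?_ ?_ ?_
    · filter_upwards [hu] with σ hσ
      simpa only [div_eq_inv_mul] using hσ.const_mul (τ - σ)⁻¹
    · filter_upwards [hM, self_mem_nhdsWithin] with σ hσ hστ
      have : 0 < τ - σ := sub_pos.2 hστ
      simp only [div_pow]
      rwa [integral_div, div_le_iff₀ (by positivity)]
    · filter_upwards [hderiv] with x hx
      refine ((hasDerivAt_iff_tendsto_slope.1 hx).mono_left
        (nhdsWithin_mono τ fun σ (hσ : σ < τ) ↦ hσ.ne)).congr fun σ ↦ ?_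
      rw [slope_comm, slope_def_field]
  intro r hr
  filter_upwards [(hlim.const_mul c).eventually_lt_const hr, hψ, self_mem_nhdsWithin]
    with σ hσr hσ hστ
  have hpos : 0 < τ - σ := sub_pos.2 hστ
  simp only [← mul_div_assoc] at hσr
  rw [integral_div, ← mul_div_assoc, div_lt_iff₀ hpos] at hσr
  exact hσ.trans_lt hσr

end LeftDerivative

section TimeDependent

variable {a b s t : ℝ} {u v : ℝ → ℝ → ℝ}

lemma continuousOn_integral_of_continuousOn_prod
    (hu : ContinuousOn (fun p : ℝ × ℝ ↦ u p.1 p.2) (Icc s t ×ˢ Icc a b)) :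
    ContinuousOn (fun τ ↦ ∫ x in Ioo a b, u τ x) (Icc s t) := by
  obtain ⟨C, hC⟩ := (isCompact_Icc.prod isCompact_Icc).exists_bound_of_continuousOn hu
  refine continuousOn_of_dominated (bound := fun _ ↦ C) (fun τ hτ ↦ ?_) (fun τ hτ ↦ ?_)
    (integrable_const C) ?_
  · exact (integrableOn_Ioo_of_continuousOn (hu.uncurry_left (f := u) τ hτ)).1
  · exact ae_restrict_of_forall_mem measurableSet_Ioo
      fun x hx ↦ hC (τ, x) ⟨hτ, Ioo_subset_Icc_self hx⟩
  · exact ae_restrict_of_forall_mem measurableSet_Ioo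
      fun x hx ↦ hu.uncurry_right (f := u) x (Ioo_subset_Icc_self hx)

lemma sq_sub_le_mul_integral_sq {f f' : ℝ → ℝ} (hst : s < t)
    (hf : ∀ τ ∈ Icc s t, HasDerivAt f (f' τ) τ) (hf' : ContinuousOn f' (Icc s t)) :
    (f t - f s) ^ 2 ≤ (t - s) * ∫ τ in Ioo s t, f' τ ^ 2 := by
  have hpos : 0 < t - s := sub_pos.2 hst
  set m := (f t - f s) / (t - s)
  have hm : m * (t - s) = f t - f s := div_mul_cancel₀ _ hpos.ne'
  have hint : IntegrableOn (fun τ ↦ f' τ ^ 2) (Ioo s t) :=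
    integrableOn_Ioo_of_continuousOn (by fun_prop)
  have hle := sub_le_integral_Ioo hst.le (f := fun τ ↦ 2 * m * f τ)
    (HasDerivAt.continuousOn fun τ hτ ↦ (hf τ hτ).const_mul (2 * m))
    (fun τ hτ ↦ (hf τ (Ioo_subset_Icc_self hτ)).const_mul (2 * m))
    (φ := fun τ ↦ m ^ 2 + f' τ ^ 2) (integrableOn_Ioo_of_continuousOn (by fun_prop))
    fun τ _ ↦ by nlinarith [sq_nonneg (m - f' τ)]
  rw [integral_add (by simp) hint] at hle
  simp only [integral_const, MeasurableSet.univ, measureReal_restrict_apply, univ_inter,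
    volume_real_Ioo_of_le hst.le, smul_eq_mul] at hle
  nlinarith

lemma aemeasurable_deriv_of_continuousOn_prod
    (hu : ContinuousOn (fun p : ℝ × ℝ ↦ u p.1 p.2) (Icc s t ×ˢ Icc a b))
    (hderiv : ∀ τ ∈ Ioo s t, ∀ x ∈ Ioo a b, HasDerivAt (fun τ ↦ u τ x) (v τ x) τ) :
    AEMeasurable (fun p : ℝ × ℝ ↦ v p.2 p.1)
      ((volume.restrict (Ioo a b)).prod (volume.restrict (Ioo s t))) := by
  rw [Measure.prod_restrict]
  obtain hst | hst := le_or_gt t s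
  · simp [Ioo_eq_empty_of_le hst, aemeasurable_zero_measure]
  obtain hab | hab := le_or_gt b a
  · simp [Ioo_eq_empty_of_le hab, aemeasurable_zero_measure]
  let U (x τ : ℝ) : ℝ := u (projIcc s t hst.le τ) (projIcc a b hab.le x)
  have hU : Continuous U.uncurry :=
    hu.comp_continuous (f := fun p : ℝ × ℝ ↦
      ((projIcc s t hst.le p.2 : ℝ), (projIcc a b hab.le p.1 : ℝ))) (by fun_prop)
      fun p ↦ ⟨Subtype.coe_prop _, Subtype.coe_prop _⟩
  refine (measurable_deriv_with_param hU).aemeasurable.congr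
    (ae_restrict_of_forall_mem (measurableSet_Ioo.prod measurableSet_Ioo) fun p hp ↦ ?_)
  refine ((hderiv p.2 hp.2 p.1 hp.1).congr_of_eventuallyEq ?_).deriv
  filter_upwards [Ioo_mem_nhds hp.2.1 hp.2.2] with τ hτ
  simp only [U, projIcc_of_mem _ (Ioo_subset_Icc_self hτ),
    projIcc_of_mem _ (Ioo_subset_Icc_self hp.1)]

lemma lintegral_sub_sq_le (hst : s < t)
    (hu : ContinuousOn (fun p : ℝ × ℝ ↦ u p.1 p.2) (Icc s t ×ˢ Icc a b))
    (hderiv : ∀ τ ∈ Icc s t, ∀ x ∈ Ioo a b, HasDerivAt (fun τ ↦ u τ x) (v τ x) τ)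
    (hv : ∀ x ∈ Ioo a b, ContinuousOn (fun τ ↦ v τ x) (Icc s t)) :
    ∫⁻ x in Ioo a b, ENNReal.ofReal ((u t x - u s x) ^ 2) ≤
      ENNReal.ofReal (t - s) * ∫⁻ τ in Ioo s t, ∫⁻ x in Ioo a b, ENNReal.ofReal (v τ x ^ 2) := by
  have hmeas := aemeasurable_deriv_of_continuousOn_prod hu
    fun τ hτ ↦ hderiv τ (Ioo_subset_Icc_self hτ)
  rw [← lintegral_lintegral_swap (hmeas.pow_const 2).ennreal_ofReal,
    ← lintegral_const_mul' _ _ ENNReal.ofReal_ne_top]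
  refine setLIntegral_mono' measurableSet_Ioo fun x hx ↦ ?_
  rw [← ofReal_integral_eq_lintegral_ofReal
    (integrableOn_Ioo_of_continuousOn ((hv x hx).fun_pow 2)) (.of_forall fun τ ↦ sq_nonneg _),
    ← ENNReal.ofReal_mul (sub_nonneg.2 hst.le)]
  exact ENNReal.ofReal_le_ofReal
    (sq_sub_le_mul_integral_sq hst (fun τ hτ ↦ hderiv τ hτ x hx) (hv x hx))

lemma integral_sub_sq_le_of_integral_deriv_sq_le {M : ℝ} (hst : s ≤ t)
    (hu : ContinuousOn (fun p : ℝ × ℝ ↦ u p.1 p.2) (Icc s t ×ˢ Icc a b))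
    (hderiv : ∀ τ ∈ Icc s t, ∀ x ∈ Ioo a b, HasDerivAt (fun τ ↦ u τ x) (v τ x) τ)
    (hv : ∀ x ∈ Ioo a b, ContinuousOn (fun τ ↦ v τ x) (Icc s t))
    (hv2 : ∀ τ ∈ Icc s t, MemLp (v τ) 2 (volume.restrict (Ioo a b)))
    (hM : ∀ τ ∈ Icc s t, ∫ x in Ioo a b, v τ x ^ 2 ≤ M) :
    ∫ x in Ioo a b, (u t x - u s x) ^ 2 ≤ M * (t - s) ^ 2 := by
  obtain rfl | hst := hst.eq_or_lt
  · simp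
  have hs := left_mem_Icc.2 hst.le
  have ht := right_mem_Icc.2 hst.le
  have hM0 : 0 ≤ M := (integral_nonneg fun x ↦ sq_nonneg _).trans (hM s hs)
  have hsub : ContinuousOn (fun x ↦ u t x - u s x) (Icc a b) :=
    (hu.uncurry_left (f := u) t ht).sub (hu.uncurry_left (f := u) s hs)
  rw [← ENNReal.ofReal_le_ofReal_iff (by positivity), ofReal_integral_eq_lintegral_ofReal
    (integrableOn_Ioo_of_continuousOn (hsub.fun_pow 2)) (.of_forall fun x ↦ sq_nonneg _)]
  calc ∫⁻ x in Ioo a b, ENNReal.ofReal ((u t x - u s x) ^ 2)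
      ≤ ENNReal.ofReal (t - s) *
          ∫⁻ τ in Ioo s t, ∫⁻ x in Ioo a b, ENNReal.ofReal (v τ x ^ 2) :=
        lintegral_sub_sq_le hst hu hderiv hv
    _ ≤ ENNReal.ofReal (t - s) * ∫⁻ _ in Ioo s t, ENNReal.ofReal M := by
        gcongr 1
        refine setLIntegral_mono' measurableSet_Ioo fun τ hτ ↦ ?_
        have hτ' := Ioo_subset_Icc_self hτ
        rw [← ofReal_integral_eq_lintegral_ofReal (hv2 τ hτ').integrable_sq
          (.of_forall fun x ↦ sq_nonneg _)]
        exact ENNReal.ofReal_le_ofReal (hM τ hτ')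
    _ = ENNReal.ofReal (M * (t - s) ^ 2) := by
        rw [setLIntegral_const, volume_Ioo, ← ENNReal.ofReal_mul hM0,
          ← ENNReal.ofReal_mul (sub_nonneg.2 hst.le)]
        congr 1
        ring

end TimeDependent

section Baire

lemma isOpen_setOf_isBoundedUnder_nhds {X Y : Type*} [TopologicalSpace X] [LE Y] {N : X → Y} :
    IsOpen {t | (𝓝 t).IsBoundedUnder (· ≤ ·) N} := by
  refine isOpen_iff_mem_nhds.2 fun t ⟨M, hM⟩ ↦ ?_
  filter_upwards [eventually_eventually_nhds.2 (eventually_map.1 hM)] with σ hσ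
  exact ⟨M, eventually_map.2 hσ⟩

lemma exists_eventually_le_of_lowerSemicontinuousOn {X : Type*} [TopologicalSpace X]
    [T2Space X] [LocallyCompactSpace X] {N : X → ℝ} {B : Set X} (hB : IsLocallyClosed B)
    (hne : B.Nonempty) (hN : LowerSemicontinuousOn N B) :
    ∃ t ∈ B, ∃ M, ∀ᶠ τ in 𝓝[B] t, N τ ≤ M := by
  have := hB.locallyCompactSpace
  have := hne.to_subtype
  obtain ⟨n, t, ht⟩ := nonempty_interior_of_iUnion_of_closed
    (f := fun n : ℕ ↦ {t : B | N t ≤ n})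
    (fun n ↦ (lowerSemicontinuous_restrict_iff.2 hN).isClosed_preimage n)
    (iUnion_eq_univ_iff.2 fun t ↦ exists_nat_ge (N t))
  exact ⟨t, t.2, n, (eventually_nhds_subtype_iff B t (N · ≤ n)).1 (mem_interior_iff_mem_nhds.1 ht)⟩

lemma exists_Ioc_subset_of_isOpen {α : Type*} [ConditionallyCompleteLinearOrder α]
    [TopologicalSpace α] [OrderTopology α] {G : Set α} {s t : α} (hG : IsOpen G) (hst : s < t)
    (ht : t ∈ G) :
    ∃ p ∈ Ico s t, (p = s ∨ p ∉ G) ∧ Ioc p t ⊆ G := by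
  obtain ⟨p, hp, hmax⟩ := ((isCompact_Icc.inter_right hG.isClosed_compl).insert s
    (s := Icc s t ∩ Gᶜ)).exists_isGreatest (insert_nonempty _ _)
  have hsp : s ≤ p := hmax (mem_insert _ _)
  refine ⟨p, ⟨hsp, ?_⟩, hp.imp_right And.right, fun τ hτ ↦ by_contra fun hτG ↦ ?_⟩
  · obtain rfl | hp := hp
    · exact hst
    · exact hp.1.2.lt_of_ne fun h ↦ hp.2 (h ▸ ht)
  · exact hτ.1.not_ge (hmax (Or.inr ⟨⟨hsp.trans hτ.1.le, hτ.2⟩, hτG⟩))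

lemma isBoundedUnder_nhds_of_forall_le_mul {N : ℝ → ℝ} {a b C t : ℝ} (hC : 0 ≤ C)
    (hN : LowerSemicontinuousOn N (Ioo a b))
    (hprop : ∀ s ∈ Ioo a b, ∀ t ∈ Ioo a b,
      (∀ τ ∈ Ioo s t, (𝓝 τ).IsBoundedUnder (· ≤ ·) N) → ∀ τ ∈ Ioo s t, N τ ≤ C * N s)
    (ht : t ∈ Ioo a b) : (𝓝 t).IsBoundedUnder (· ≤ ·) N := by
  set G := {t | (𝓝 t).IsBoundedUnder (· ≤ ·) N}
  have hG : IsOpen G := isOpen_setOf_isBoundedUnder_nhds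
  by_contra htG
  obtain ⟨t₁, ht₁, M, hM⟩ := exists_eventually_le_of_lowerSemicontinuousOn
    (isOpen_Ioo.isLocallyClosed.inter hG.isClosed_compl.isLocallyClosed) ⟨t, ht, htG⟩
    (hN.mono inter_subset_left)
  rw [eventually_nhdsWithin_iff] at hM
  obtain ⟨l, r, ht₁lr, hlr⟩ :=
    mem_nhds_iff_exists_Ioo_subset.1 (hM.and (Ioo_mem_nhds ht₁.1.1 ht₁.1.2))
  obtain ⟨s, hls, hst₁⟩ := exists_between ht₁lr.1
  refine ht₁.2 ⟨max M (C * max M (N s)), eventually_map.2 ?_⟩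
  filter_upwards [Ioo_mem_nhds hst₁ ht₁lr.2] with τ hτ
  have hτlr := hlr ⟨hls.trans hτ.1, hτ.2⟩
  by_cases hτG : τ ∈ G
  · obtain ⟨p, hp, hps, hpτ⟩ := exists_Ioc_subset_of_isOpen hG hτ.1 hτG
    obtain ⟨_, τ', hττ', hτ'⟩ :=
      mem_nhds_iff_exists_Ioo_subset.1 (inter_mem (hG.mem_nhds hτG) (Ioo_mem_nhds hτ.1 hτ.2))
    obtain ⟨q, hτq, hqτ'⟩ := exists_between hττ'.2
    have hplr := hlr ⟨hls.trans_le hp.1, hp.2.trans hτ.2⟩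
    have hq := hlr ⟨hls.trans (hτ.1.trans hτq), (hτ' ⟨hττ'.1.trans hτq, hqτ'⟩).2.2⟩
    have hpM : N p ≤ max M (N s) := by
      obtain rfl | hpG := hps
      · exact le_max_right _ _
      · exact (hplr.1 ⟨hplr.2, hpG⟩).trans (le_max_left _ _)
    refine (hprop p hplr.2 q hq.2 (fun σ hσ ↦ ?_) τ ⟨hp.2, hτq⟩).trans
      ((mul_le_mul_of_nonneg_left hpM hC).trans (le_max_right _ _))
    obtain hστ | hτσ := le_or_gt σ τ
    · exact hpτ ⟨hσ.1, hστ⟩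
    · exact (hτ' ⟨hττ'.1.trans hτσ, hσ.2.trans hqτ'⟩).1
  · exact (hτlr.1 ⟨hτlr.2, hτG⟩).trans (le_max_left _ _)

end Baire

/-! ### Flows -/

/-- A solution of `u_t + u_x + u_xxx = 0` on the time interval `[a, b]`, with named spatial
derivatives `u₁ = u_x`, `u₂ = u_xx`, `u₃ = u_xxx`. The regularity in time is only separate: the
equation holds pointwise in the open rectangle, where `u_t = -(u₁ + u₃)` is continuous in time for
each fixed `x`. -/
structure Flow (L a b : ℝ) (u u₁ u₂ u₃ : ℝ → ℝ → ℝ) : Prop where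
  profile : ∀ t ∈ Icc a b, Profile L (u t) (u₁ t) (u₂ t) (u₃ t)
  cont : ContinuousOn (fun p : ℝ × ℝ ↦ u p.1 p.2) (Icc a b ×ˢ Icc 0 L)
  deriv : ∀ t ∈ Ioo a b, ∀ x ∈ Ioo 0 L, HasDerivAt (fun s ↦ u s x) (-(u₁ t x + u₃ t x)) t
  cont_deriv : ∀ x ∈ Ioo 0 L, ContinuousOn (fun t ↦ u₁ t x + u₃ t x) (Ioo a b)

/-- The squared `L²(0, L)` norm of the time derivative `u_t = -(u₁ + u₃)` of a flow. -/
noncomputable def rateSq (L : ℝ) (u₁ u₃ : ℝ → ℝ → ℝ) (t : ℝ) : ℝ :=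
  ∫ x in Ioo 0 L, (u₁ t x + u₃ t x) ^ 2

lemma rateSq_nonneg (L : ℝ) (u₁ u₃ : ℝ → ℝ → ℝ) (t : ℝ) : 0 ≤ rateSq L u₁ u₃ t :=
  integral_nonneg fun _ ↦ sq_nonneg _

namespace Flow

variable {L a b c d s t τ : ℝ} {u u₁ u₂ u₃ y y₁ y₂ y₃ : ℝ → ℝ → ℝ}

lemma mono (h : Flow L a b u u₁ u₂ u₃) (hac : a ≤ c) (hdb : d ≤ b) : Flow L c d u u₁ u₂ u₃ where
  profile t ht := h.profile t (Icc_subset_Icc hac hdb ht)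
  cont := h.cont.mono (prod_mono_left (Icc_subset_Icc hac hdb))
  deriv t ht := h.deriv t (Ioo_subset_Ioo hac hdb ht)
  cont_deriv x hx := (h.cont_deriv x hx).mono (Ioo_subset_Ioo hac hdb)

lemma shift (h : Flow L a b u u₁ u₂ u₃) (k : ℝ) :
    Flow L (a - k) (b - k) (fun t ↦ u (t + k)) (fun t ↦ u₁ (t + k)) (fun t ↦ u₂ (t + k))
      (fun t ↦ u₃ (t + k)) where
  profile t ht := h.profile (t + k) ⟨by linarith [ht.1], by linarith [ht.2]⟩
  cont := h.cont.comp (f := fun p : ℝ × ℝ ↦ (p.1 + k, p.2)) (by fun_prop)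
    fun p hp ↦ ⟨⟨by linarith [hp.1.1], by linarith [hp.1.2]⟩, hp.2⟩
  deriv t ht x hx :=
    (h.deriv (t + k) ⟨by linarith [ht.1], by linarith [ht.2]⟩ x hx).comp_add_const t k
  cont_deriv x hx := (h.cont_deriv x hx).comp (f := (· + k)) (by fun_prop)
    fun t ht ↦ ⟨by linarith [ht.1], by linarith [ht.2]⟩

lemma sub (h : Flow L a b u u₁ u₂ u₃) (k : Flow L a b y y₁ y₂ y₃) :
    Flow L a b (fun t x ↦ u t x - y t x) (fun t x ↦ u₁ t x - y₁ t x) (fun t x ↦ u₂ t x - y₂ t x)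
      (fun t x ↦ u₃ t x - y₃ t x) where
  profile t ht := (h.profile t ht).sub (k.profile t ht)
  cont := h.cont.sub k.cont
  deriv t ht x hx := ((h.deriv t ht x hx).sub (k.deriv t ht x hx)).congr_deriv (by ring)
  cont_deriv x hx := ((h.cont_deriv x hx).sub (k.cont_deriv x hx)).congr
    fun t _ ↦ by simp only [Pi.sub_apply]; ring

lemma continuousOn_rate (h : Flow L a b u u₁ u₂ u₃) (ht : t ∈ Icc a b) :
    ContinuousOn (fun x ↦ u₁ t x + u₃ t x) (Icc 0 L) :=
  (h.profile t ht).cont₁.add (h.profile t ht).cont₃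

lemma rateSq_sub_le (h : Flow L a b u u₁ u₂ u₃) (k : Flow L a b y y₁ y₂ y₃) (ht : t ∈ Icc a b) :
    rateSq L (fun t x ↦ u₁ t x - y₁ t x) (fun t x ↦ u₃ t x - y₃ t x) t ≤
      2 * rateSq L u₁ u₃ t + 2 * rateSq L y₁ y₃ t := by
  have hu := h.continuousOn_rate ht
  have hy := k.continuousOn_rate ht
  have hint {f : ℝ → ℝ} (hf : ContinuousOn f (Icc 0 L)) := integrableOn_Ioo_of_continuousOn hf
  rw [rateSq, rateSq, rateSq, ← integral_const_mul, ← integral_const_mul,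
    ← integral_add (hint (by fun_prop)) (hint (by fun_prop))]
  refine setIntegral_mono_on (hint (((h.sub k).continuousOn_rate ht).fun_pow 2))
    (hint (by fun_prop)) measurableSet_Ioo fun x _ ↦ ?_
  nlinarith [sq_nonneg (u₁ t x + u₃ t x + (y₁ t x + y₃ t x))]

lemma isBoundedUnder_rateSq_sub (h : Flow L a b u u₁ u₂ u₃) (k : Flow L a b y y₁ y₂ y₃)
    (hτ : τ ∈ Ioo a b) (hu : (𝓝 τ).IsBoundedUnder (· ≤ ·) (rateSq L u₁ u₃))
    (hy : (𝓝 τ).IsBoundedUnder (· ≤ ·) (rateSq L y₁ y₃)) :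
    (𝓝 τ).IsBoundedUnder (· ≤ ·)
      (rateSq L (fun t x ↦ u₁ t x - y₁ t x) (fun t x ↦ u₃ t x - y₃ t x)) := by
  obtain ⟨M, hM⟩ := hu
  obtain ⟨M', hM'⟩ := hy
  refine ⟨2 * M + 2 * M', eventually_map.2 ?_⟩
  filter_upwards [eventually_map.1 hM, eventually_map.1 hM', Ioo_mem_nhds hτ.1 hτ.2]
    with σ hσ hσ' hσab
  have := h.rateSq_sub_le k (Ioo_subset_Icc_self hσab)
  linarith

lemma eventually_integral_sub_sq_le (h : Flow L a b u u₁ u₂ u₃) (hτ : τ ∈ Ioo a b)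
    (hb : (𝓝 τ).IsBoundedUnder (· ≤ ·) (rateSq L u₁ u₃)) :
    ∃ M, ∀ᶠ σ in 𝓝[<] τ, ∫ x in Ioo 0 L, (u τ x - u σ x) ^ 2 ≤ M * (τ - σ) ^ 2 := by
  obtain ⟨M, hM⟩ := hb
  obtain ⟨l, r, hτlr, hlr⟩ := mem_nhds_iff_exists_Ioo_subset.1
    ((eventually_map.1 hM).and (Ioo_mem_nhds hτ.1 hτ.2))
  refine ⟨M, ?_⟩
  filter_upwards [Ioo_mem_nhdsLT hτlr.1] with σ hσ
  have hsub (ρ : ℝ) (hρ : ρ ∈ Icc σ τ) : rateSq L u₁ u₃ ρ ≤ M ∧ ρ ∈ Ioo a b :=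
    hlr ⟨hσ.1.trans_le hρ.1, hρ.2.trans_lt hτlr.2⟩
  have hIoo : Icc σ τ ⊆ Ioo a b := fun ρ hρ ↦ (hsub ρ hρ).2
  have hIcc : Icc σ τ ⊆ Icc a b := hIoo.trans Ioo_subset_Icc_self
  exact integral_sub_sq_le_of_integral_deriv_sq_le (v := fun t x ↦ -(u₁ t x + u₃ t x)) hσ.2.le
    (h.cont.mono (prod_mono_left hIcc)) (fun ρ hρ ↦ h.deriv ρ (hIoo hρ))
    (fun x hx ↦ ((h.cont_deriv x hx).mono hIoo).fun_neg)
    (fun ρ hρ ↦ memLp_Ioo_of_continuousOn (h.continuousOn_rate (hIcc hρ)).fun_neg)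
    fun ρ hρ ↦ by simp only [neg_sq]; exact (hsub ρ hρ).1

lemma leftDerivLE (h : Flow L a b u u₁ u₂ u₃) (hτ : τ ∈ Ioo a b)
    (hb : (𝓝 τ).IsBoundedUnder (· ≤ ·) (rateSq L u₁ u₃)) {ψ g : ℝ → ℝ} {c : ℝ}
    (hg : MemLp g 2 (volume.restrict (Ioo 0 L)))
    (hψ : ∀ σ ∈ Ioo a τ, ψ τ - ψ σ ≤ c * ∫ x in Ioo 0 L, g x * (u τ x - u σ x)) :
    LeftDerivLE ψ (c * ∫ x in Ioo 0 L, g x * -(u₁ τ x + u₃ τ x)) τ := by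
  obtain ⟨M, hM⟩ := h.eventually_integral_sub_sq_le hτ hb
  have hleft := Ioo_mem_nhdsLT hτ.1
  refine leftDerivLE_of_sub_le_integral_mul hg (mem_of_superset hleft fun σ hσ ↦ ?_) hM
    (ae_restrict_of_forall_mem measurableSet_Ioo (h.deriv τ hτ)) (mem_of_superset hleft hψ)
  exact memLp_Ioo_of_continuousOn ((h.profile τ (Ioo_subset_Icc_self hτ)).cont.sub
    (h.profile σ ⟨hσ.1.le, hσ.2.le.trans hτ.2.le⟩).cont)

lemma leftDerivLE_integral_sub_sq (h : Flow L a b u u₁ u₂ u₃) (hτ : τ ∈ Ioo a b)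
    (hb : (𝓝 τ).IsBoundedUnder (· ≤ ·) (rateSq L u₁ u₃)) {f : ℝ → ℝ}
    (hf : ContinuousOn f (Icc 0 L)) :
    LeftDerivLE (fun t ↦ ∫ x in Ioo 0 L, (u t x - f x) ^ 2)
      (2 * ∫ x in Ioo 0 L, (u τ x - f x) * -(u₁ τ x + u₃ τ x)) τ := by
  have huτ := (h.profile τ (Ioo_subset_Icc_self hτ)).cont
  refine h.leftDerivLE hτ hb (memLp_Ioo_of_continuousOn (huτ.sub hf)) fun σ hσ ↦ ?_
  have huσ := (h.profile σ ⟨hσ.1.le, hσ.2.le.trans hτ.2.le⟩).cont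
  have hint {f : ℝ → ℝ} (hf : ContinuousOn f (Icc 0 L)) := integrableOn_Ioo_of_continuousOn hf
  rw [← integral_sub (hint (by fun_prop)) (hint (by fun_prop)), ← integral_const_mul]
  exact setIntegral_mono_on (hint (by fun_prop)) (hint (by fun_prop)) measurableSet_Ioo
    fun x _ ↦ by nlinarith [sq_nonneg (u τ x - u σ x)]

lemma continuousOn_integral_sub_sq (h : Flow L a b u u₁ u₂ u₃) {f : ℝ → ℝ}
    (hf : ContinuousOn f (Icc 0 L)) :
    ContinuousOn (fun t ↦ ∫ x in Ioo 0 L, (u t x - f x) ^ 2) (Icc a b) :=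
  continuousOn_integral_of_continuousOn_prod (u := fun t x ↦ (u t x - f x) ^ 2)
    ((h.cont.sub (hf.comp continuousOn_snd fun _ hp ↦ hp.2)).fun_pow 2)

lemma integral_sq_le_of_isBoundedUnder (h : Flow L a b u u₁ u₂ u₃) (hL : 0 ≤ L) (hab : a ≤ b)
    (hb : ∀ τ ∈ Ioo a b, (𝓝 τ).IsBoundedUnder (· ≤ ·) (rateSq L u₁ u₃)) :
    ∫ x in Ioo 0 L, u b x ^ 2 ≤ ∫ x in Ioo 0 L, u a x ^ 2 := by
  have hdecay : ∀ τ ∈ Ioo a b, LeftDerivLE (fun t ↦ ∫ x in Ioo 0 L, (u t x - 0) ^ 2) 0 τ := by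
    intro τ hτ r hr
    refine h.leftDerivLE_integral_sub_sq hτ (hb τ hτ) continuousOn_const r (hr.trans_le' ?_)
    have := (h.profile τ (Ioo_subset_Icc_self hτ)).integral_mul_deriv_add_nonneg hL
    simp only [sub_zero, mul_neg, integral_neg]
    linarith
  have := sub_le_mul_sub_of_leftDerivLE hab (h.continuousOn_integral_sub_sq continuousOn_const)
    hdecay
  simp only [sub_zero] at this
  linarith

lemma two_mul_integral_sub_mul_le (h : Flow L a b u u₁ u₂ u₃) (hL : 0 ≤ L) (hs : s ∈ Icc a b)
    (ht : t ∈ Icc a b) {k : ℝ} (hk : 0 < k) :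
    2 * ∫ x in Ioo 0 L, (u t x - u s x) * -(u₁ t x + u₃ t x) ≤
      (∫ x in Ioo 0 L, (u t x - u s x) ^ 2) / (2 * k) + 2 * k * rateSq L u₁ u₃ s := by
  have := (h.profile s hs).cont
  have := (h.profile s hs).cont₁
  have := (h.profile s hs).cont₃
  have := (h.profile t ht).cont
  have := (h.profile t ht).cont₁
  have := (h.profile t ht).cont₃
  have hint {f : ℝ → ℝ} (hf : ContinuousOn f (Icc 0 L)) := integrableOn_Ioo_of_continuousOn hf
  have hdiss := ((h.profile t ht).sub (h.profile s hs)).integral_mul_deriv_add_nonneg hL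
  have hyoung : ∫ x in Ioo 0 L, (2 * ((u t x - u s x) * -(u₁ t x + u₃ t x)) +
      2 * ((u t x - u s x) * (u₁ t x - u₁ s x + (u₃ t x - u₃ s x)))) ≤
      ∫ x in Ioo 0 L, ((u t x - u s x) ^ 2 / (2 * k) + 2 * k * (u₁ s x + u₃ s x) ^ 2) := by
    refine setIntegral_mono_on (hint (by fun_prop)) (hint (by fun_prop)) measurableSet_Ioo
      fun x _ ↦ sub_nonneg.1 ?_
    have : 0 ≤ (u t x - u s x + 2 * k * (u₁ s x + u₃ s x)) ^ 2 / (2 * k) := by positivity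
    convert! this using 1
    field_simp
    ring
  rw [integral_add (hint (by fun_prop)) (hint (by fun_prop)),
    integral_add (hint (by fun_prop)) (hint (by fun_prop)), integral_const_mul,
    integral_const_mul, integral_const_mul, integral_div, ← rateSq] at hyoung
  linarith

lemma integral_sub_sq_le_of_isBoundedUnder (h : Flow L a b u u₁ u₂ u₃) (hL : 0 ≤ L) (hab : a < b)
    (hb : ∀ τ ∈ Ioo a b, (𝓝 τ).IsBoundedUnder (· ≤ ·) (rateSq L u₁ u₃)) :
    ∫ x in Ioo 0 L, (u b x - u a x) ^ 2 ≤ 4 * (b - a) ^ 2 * rateSq L u₁ u₃ a := by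
  have hk : 0 < b - a := sub_pos.2 hab
  have ha := left_mem_Icc.2 hab.le
  have hua := (h.profile a ha).cont
  set ψ := fun t ↦ ∫ x in Ioo 0 L, (u t x - u a x) ^ 2
  have hψ : ContinuousOn ψ (Icc a b) := h.continuousOn_integral_sub_sq hua
  obtain ⟨m, hm, hmax⟩ := isCompact_Icc.exists_isMaxOn (nonempty_Icc.2 hab.le) hψ
  set K := ψ m / (2 * (b - a)) + 2 * (b - a) * rateSq L u₁ u₃ a
  have hK0 : 0 ≤ K := by
    have : 0 ≤ ψ m := integral_nonneg fun x ↦ sq_nonneg _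
    have := rateSq_nonneg L u₁ u₃ a
    positivity
  have hgrowth : ∀ τ ∈ Ioo a m, LeftDerivLE ψ K τ := by
    intro τ hτ r hr
    have hτ' : τ ∈ Ioo a b := ⟨hτ.1, hτ.2.trans_le hm.2⟩
    refine h.leftDerivLE_integral_sub_sq hτ' (hb τ hτ') hua r (hr.trans_le' ?_)
    refine (h.two_mul_integral_sub_mul_le hL ha (Ioo_subset_Icc_self hτ') hk).trans ?_
    exact add_le_add_left
      (div_le_div_of_nonneg_right (hmax (Ioo_subset_Icc_self hτ')) (by positivity)) _
  have hle := sub_le_mul_sub_of_leftDerivLE hm.1 (hψ.mono (Icc_subset_Icc_right hm.2)) hgrowth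
  have hψa : ψ a = 0 := by simp [ψ]
  have hbound : ψ m ≤ K * (b - a) := by
    have := mul_le_mul_of_nonneg_left (sub_le_sub_right hm.2 a) hK0
    linarith
  have hKk : K * (b - a) = ψ m / 2 + 2 * (b - a) ^ 2 * rateSq L u₁ u₃ a := by
    simp only [K]
    field_simp
  have : ψ b ≤ ψ m := hmax (right_mem_Icc.2 hab.le)
  linarith

lemma integral_add_sub_sq_le_of_isBoundedUnder (h : Flow L a b u u₁ u₂ u₃) (hL : 0 ≤ L)
    (hb : ∀ τ ∈ Ioo a b, (𝓝 τ).IsBoundedUnder (· ≤ ·) (rateSq L u₁ u₃)) {k : ℝ} (hk : 0 < k)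
    (hat : a ≤ t) (htb : t + k ≤ b) :
    ∫ x in Ioo 0 L, (u (t + k) x - u t x) ^ 2 ≤ 4 * k ^ 2 * rateSq L u₁ u₃ a := by
  have hshift : Flow L a t (fun t ↦ u (t + k)) (fun t ↦ u₁ (t + k)) (fun t ↦ u₂ (t + k))
      (fun t ↦ u₃ (t + k)) := (h.shift k).mono (by linarith) (by linarith)
  have hbase : Flow L a t u u₁ u₂ u₃ := h.mono le_rfl (by linarith)
  have hcontr := (hshift.sub hbase).integral_sq_le_of_isBoundedUnder hL hat fun τ hτ ↦
    hshift.isBoundedUnder_rateSq_sub hbase hτ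
      ((continuous_add_const k).continuousAt.isBoundedUnder_comp
        (hb (τ + k) ⟨by linarith [hτ.1], by linarith [hτ.2]⟩))
      (hb τ ⟨hτ.1, by linarith [hτ.2]⟩)
  have hfirst : Flow L a (a + k) u u₁ u₂ u₃ := h.mono le_rfl (by linarith)
  have hstep := hfirst.integral_sub_sq_le_of_isBoundedUnder hL (by linarith) fun τ hτ ↦
    hb τ ⟨hτ.1, by linarith [hτ.2]⟩
  rw [add_sub_cancel_left] at hstep
  exact hcontr.trans hstep

lemma rateSq_le_of_isBoundedUnder (h : Flow L a b u u₁ u₂ u₃) (hL : 0 ≤ L) (ht : t ∈ Ioo a b)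
    (hb : ∀ τ ∈ Ioo a b, (𝓝 τ).IsBoundedUnder (· ≤ ·) (rateSq L u₁ u₃)) :
    rateSq L u₁ u₃ t ≤ 4 * rateSq L u₁ u₃ a := by
  have hsmall : ∀ᶠ k in 𝓝[>] (0 : ℝ), 0 < k ∧ t + k < b := by
    filter_upwards [Ioo_mem_nhdsGT (sub_pos.2 ht.2)] with k hk
    exact ⟨hk.1, by linarith [hk.2]⟩
  have hlim : ∀ᵐ x ∂volume.restrict (Ioo 0 L), Tendsto (fun k ↦ k⁻¹ * (u (t + k) x - u t x))
      (𝓝[>] 0) (𝓝 (-(u₁ t x + u₃ t x))) :=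
    ae_restrict_of_forall_mem measurableSet_Ioo fun x hx ↦
      (hasDerivAt_iff_tendsto_slope_zero.1 (h.deriv t ht x hx)).mono_left
        (nhdsWithin_mono _ fun _ hk ↦ ne_of_gt hk)
  have := (integral_sq_le_of_tendsto_ae (K := 4 * rateSq L u₁ u₃ a) ?_ ?_ hlim).2
  · simp only [neg_sq] at this
    exact this
  · filter_upwards [hsmall] with k ⟨hk, htk⟩
    exact memLp_Ioo_of_continuousOn <| continuousOn_const.mul <|
      (h.profile (t + k) ⟨by linarith [ht.1], htk.le⟩).cont.sub
        (h.profile t (Ioo_subset_Icc_self ht)).cont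
  · filter_upwards [hsmall] with k ⟨hk, htk⟩
    have := h.integral_add_sub_sq_le_of_isBoundedUnder hL hb hk ht.1.le htk.le
    simp only [mul_pow, integral_const_mul]
    rw [inv_pow, inv_mul_le_iff₀ (by positivity)]
    linarith

lemma lowerSemicontinuousOn_rateSq (h : Flow L a b u u₁ u₂ u₃) :
    LowerSemicontinuousOn (rateSq L u₁ u₃) (Ioo a b) := by
  intro t ht y hy
  by_contra hfreq
  have : (𝓝[Ioo a b] t ⊓ 𝓟 {τ | rateSq L u₁ u₃ τ ≤ y}).NeBot :=
    frequently_iff_neBot.1 ((not_eventually.1 hfreq).mono fun _ ↦ le_of_not_gt)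
  have hlim : ∀ᵐ x ∂volume.restrict (Ioo 0 L), Tendsto (fun τ ↦ u₁ τ x + u₃ τ x)
      (𝓝[Ioo a b] t ⊓ 𝓟 {τ | rateSq L u₁ u₃ τ ≤ y}) (𝓝 (u₁ t x + u₃ t x)) :=
    ae_restrict_of_forall_mem measurableSet_Ioo fun x hx ↦
      (h.cont_deriv x hx t ht).mono_left inf_le_left
  refine hy.not_ge (integral_sq_le_of_tendsto_ae ?_ ?_ hlim).2
  · filter_upwards [mem_inf_of_left self_mem_nhdsWithin] with τ hτ
    exact memLp_Ioo_of_continuousOn (h.continuousOn_rate (Ioo_subset_Icc_self hτ))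
  · exact mem_inf_of_right (mem_principal_self _)

lemma isBoundedUnder_rateSq (h : Flow L a b u u₁ u₂ u₃) (hL : 0 ≤ L) (ht : t ∈ Ioo a b) :
    (𝓝 t).IsBoundedUnder (· ≤ ·) (rateSq L u₁ u₃) :=
  isBoundedUnder_nhds_of_forall_le_mul zero_le_four h.lowerSemicontinuousOn_rateSq
    (fun _ hs _ ht hb _ hτ ↦ (h.mono hs.1.le ht.2.le).rateSq_le_of_isBoundedUnder hL hτ hb) ht

lemma integral_sq_le (h : Flow L a b u u₁ u₂ u₃) (hL : 0 ≤ L) (ht : t ∈ Icc a b) :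
    ∫ x in Ioo 0 L, u t x ^ 2 ≤ ∫ x in Ioo 0 L, u a x ^ 2 :=
  (h.mono le_rfl ht.2).integral_sq_le_of_isBoundedUnder hL ht.1 fun _ hτ ↦
    h.isBoundedUnder_rateSq hL ⟨hτ.1, hτ.2.trans_le ht.2⟩

lemma rateSq_le_max (h : Flow L a b u u₁ u₂ u₃) (hL : 0 ≤ L) (ht : t ∈ Icc a b) :
    rateSq L u₁ u₃ t ≤ max (4 * rateSq L u₁ u₃ a) (rateSq L u₁ u₃ b) := by
  obtain rfl | rfl | ht := eq_endpoints_or_mem_Ioo_of_mem_Icc ht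
  · exact le_max_of_le_left (by linarith [rateSq_nonneg L u₁ u₃ t])
  · exact le_max_right _ _
  · exact le_max_of_le_left <| h.rateSq_le_of_isBoundedUnder hL ht fun _ hτ ↦
      h.isBoundedUnder_rateSq hL hτ

lemma exists_abs_lyapunovGrad_le (h : Flow L a b u u₁ u₂ u₃) (hL : 0 < L) :
    ∃ G, ∀ t ∈ Icc a b, ∀ x ∈ Ioo 0 L, |lyapunovGrad L (u t) (u₂ t) x| ≤ G := by
  obtain ⟨U, hU⟩ := (isCompact_Icc.prod isCompact_Icc).exists_bound_of_continuousOn h.cont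
  exact ⟨_, fun t ht _ hx ↦ (h.profile t ht).abs_lyapunovGrad_le hL
    (fun x hx ↦ hU (t, x) ⟨ht, hx⟩) (h.rateSq_le_max hL.le ht) hx⟩

lemma continuousOn_lyapunov (h : Flow L a b u u₁ u₂ u₃) (hL : 0 < L) :
    ContinuousOn (fun t ↦ lyapunov L (u t) (u₁ t)) (Icc a b) := by
  obtain ⟨G, hG⟩ := h.exists_abs_lyapunovGrad_le hL
  intro s hs
  have hdist : Tendsto (fun t ↦ 2 * G * ∫ x in Ioo 0 L, |u t x - u s x|) (𝓝[Icc a b] s) (𝓝 0) := by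
    have := (continuousOn_integral_of_continuousOn_prod (u := fun t x ↦ |u t x - u s x|)
      (h.cont.sub ((h.profile s hs).cont.comp continuousOn_snd fun _ hp ↦ hp.2)).abs s hs).tendsto
    simpa using this.const_mul (2 * G)
  refine tendsto_iff_dist_tendsto_zero.2 (squeeze_zero' (.of_forall fun _ ↦ dist_nonneg) ?_ hdist)
  filter_upwards [self_mem_nhdsWithin] with t ht
  have hts := (h.profile t ht).lyapunov_sub_le_mul_integral_abs (h.profile s hs) hL (hG t ht)
  have hst := (h.profile s hs).lyapunov_sub_le_mul_integral_abs (h.profile t ht) hL (hG s hs)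
  simp only [abs_sub_comm (u s _)] at hst
  exact abs_le.2 ⟨by linarith, hts⟩

lemma lyapunov_le_max (h : Flow L a b u u₁ u₂ u₃) (hL : 0 < L) (ht : t ∈ Icc a b) :
    lyapunov L (u t) (u₁ t) ≤ max (lyapunov L (u a) (u₁ a))
      ((3 + 2 * L ^ 3 + 6 * L) * ∫ x in Ioo 0 L, u a x ^ 2) := by
  have hIoo : Ioo a t ⊆ Ioo a b := Ioo_subset_Ioo_right ht.2
  have hIcc : Ioo a t ⊆ Icc a b := hIoo.trans Ioo_subset_Icc_self
  refine le_of_leftDerivLE_neg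
    (ρ := fun τ ↦ 2 * ∫ x in Ioo 0 L, lyapunovGrad L (u τ) (u₂ τ) x * -(u₁ τ x + u₃ τ x)) ht.1
    ((h.continuousOn_lyapunov hL).mono (Icc_subset_Icc_right ht.2)) (le_max_left _ _)
    (fun τ hτ ↦ ?_) fun τ hτ hlt ↦ ?_
  · refine h.leftDerivLE (hIoo hτ) (h.isBoundedUnder_rateSq hL.le (hIoo hτ))
      ((h.profile τ (hIcc hτ)).memLp_lyapunovGrad hL) fun σ hσ ↦ ?_
    exact (h.profile τ (hIcc hτ)).lyapunov_sub_le
      (h.profile σ ⟨hσ.1.le, hσ.2.le.trans (hIcc hτ).2⟩) hL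
  · have hdiss := (h.profile τ (hIcc hτ)).integral_lyapunovGrad_mul_le hL
    have hdecay := mul_le_mul_of_nonneg_left (h.integral_sq_le hL.le (hIcc hτ))
      (by positivity : 0 ≤ 3 + 2 * L ^ 3 + 6 * L)
    have := (le_max_right _ _).trans_lt hlt
    linarith

lemma integral_sq_add_sq (h : Flow L a b u u₁ u₂ u₃) (ht : t ∈ Icc a b) :
    ∫ x in Ioo 0 L, (u t x ^ 2 + u₁ t x ^ 2) =
      (∫ x in Ioo 0 L, u t x ^ 2) + ∫ x in Ioo 0 L, u₁ t x ^ 2 :=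
  integral_add (integrableOn_Ioo_of_continuousOn ((h.profile t ht).cont.pow 2))
    (integrableOn_Ioo_of_continuousOn ((h.profile t ht).cont₁.pow 2))

lemma integral_sq_add_sq_le (h : Flow L a b u u₁ u₂ u₃) (hL : 0 < L) (ht : t ∈ Icc a b) :
    ∫ x in Ioo 0 L, (u t x ^ 2 + u₁ t x ^ 2) ≤
      (9 + 6 * L + 2 * L ^ 3) * ∫ x in Ioo 0 L, (u a x ^ 2 + u₁ a x ^ 2) := by
  have ha : a ∈ Icc a b := left_mem_Icc.2 (ht.1.trans ht.2)
  rw [h.integral_sq_add_sq ht, h.integral_sq_add_sq ha]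
  have hdecay := h.integral_sq_le hL.le ht
  have hcoercive := (h.profile t ht).integral_deriv_sq_le_lyapunov hL
  have hinit := (h.profile a ha).lyapunov_le hL
  have hE : 0 ≤ ∫ x in Ioo 0 L, u a x ^ 2 := integral_nonneg fun _ ↦ sq_nonneg _
  have hA : 0 ≤ ∫ x in Ioo 0 L, u₁ a x ^ 2 := integral_nonneg fun _ ↦ sq_nonneg _
  have hLA := mul_nonneg hL.le hA
  have hL3E := mul_nonneg (pow_nonneg hL.le 3) hE
  have hL3A := mul_nonneg (pow_nonneg hL.le 3) hA
  obtain hmax | hmax := le_max_iff.1 (h.lyapunov_le_max hL ht) <;> linarith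

end Flow

end LinearKdV

namespace H1norm

variable {L : ℝ}

lemma eq_sqrt_setIntegral (hL : 0 ≤ L) (f : ℝ → ℝ) :
    H1norm L f = √(∫ x in Ioo 0 L, (f x ^ 2 + derivWithin f (Icc 0 L) x ^ 2)) := by
  rw [H1norm, intervalIntegral.integral_of_le hL, integral_Ioc_eq_integral_Ioo]

lemma congr (hL : 0 ≤ L) {f g : ℝ → ℝ} (hfg : EqOn f g (Icc 0 L)) :
    H1norm L f = H1norm L g := by
  rw [H1norm, H1norm]
  congr 1
  refine intervalIntegral.integral_congr fun x hx ↦ ?_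
  rw [uIcc_of_le hL] at hx
  simp only [hfg hx, derivWithin_congr hfg (hfg hx)]

end H1norm

namespace IsLinearKdVSol
open LinearKdV

variable {L T t : ℝ} {z : ℝ → ℝ → ℝ}

lemma profile (h : IsLinearKdVSol L T z) (hL : 0 < L) (ht : t ∈ Icc 0 T) :
    Profile L (z t) (derivWithin (z t) (Icc 0 L)) (iteratedDerivWithin 2 (z t) (Icc 0 L))
      (iteratedDerivWithin 3 (z t) (Icc 0 L)) := by
  obtain ⟨hx, -, -, -, hbdry⟩ := h
  have hf : ContDiffOn ℝ (3 : ℕ) (z t) (Icc 0 L) := hx t ht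
  have hcont {m : ℕ} (hm : m ≤ 3) :=
    hf.continuousOn_iteratedDerivWithin (mod_cast hm) (uniqueDiffOn_Icc hL)
  have hderiv {m : ℕ} (hm : m < 3) (x : ℝ) (hx : x ∈ Ioo 0 L) :=
    hasDerivAt_iteratedDerivWithin_Icc hf hm hx
  obtain ⟨h0, hLz, hLz'⟩ := hbdry t ht
  have h1 : iteratedDerivWithin 1 (z t) (Icc 0 L) = derivWithin (z t) (Icc 0 L) :=
    iteratedDerivWithin_one
  exact {
    cont := hf.continuousOn
    cont₁ := h1 ▸ hcont (m := 1) (by norm_num)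
    cont₂ := hcont (by norm_num)
    cont₃ := hcont le_rfl
    deriv := by simpa [h1] using hderiv (m := 0) (by norm_num)
    deriv₁ := h1 ▸ hderiv (m := 1) (by norm_num)
    deriv₂ := hderiv (by norm_num)
    left_eq_zero := h0
    right_eq_zero := hLz
    right_deriv_eq_zero := hLz' }

lemma flow (h : IsLinearKdVSol L T z) (hL : 0 < L) (hT : 0 < T) :
    Flow L 0 T z (fun t ↦ derivWithin (z t) (Icc 0 L))
      (fun t ↦ iteratedDerivWithin 2 (z t) (Icc 0 L))
      (fun t ↦ iteratedDerivWithin 3 (z t) (Icc 0 L)) where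
  profile _ ht := h.profile hL ht
  cont := h.2.2.1
  deriv t ht x hx := by
    obtain ⟨-, ht_reg, -, heq, -⟩ := h
    have hd := (ht_reg x (Ioo_subset_Icc_self hx)).differentiableOn one_ne_zero t
      (Ioo_subset_Icc_self ht)
    refine (hd.hasDerivWithinAt.hasDerivAt (Icc_mem_nhds ht.1 ht.2)).congr_deriv ?_
    linarith [heq t ht x hx]
  cont_deriv x hx := by
    obtain ⟨-, ht_reg, -, heq, -⟩ := h
    refine (((ht_reg x (Ioo_subset_Icc_self hx)).continuousOn_derivWithin
      (uniqueDiffOn_Icc hT) le_rfl).fun_neg.mono Ioo_subset_Icc_self).congr fun t ht ↦ ?_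
    linarith [heq t ht x hx]

end IsLinearKdVSol

/-- there is a constant `C > 0` (independent of `T`) such that for every
initial datum `z₀ ∈ H³(0,L)` (here: `C³` on `[0,L]`) satisfying the boundary
conditions `z₀(0) = z₀(L) = z₀′(L) = 0`, every `T > 0` and every classical solution
`z` of the linearized KdV system with `z(0,·) = z₀`, one has
`‖z(t,·)‖_{H₀¹(0,L)} ≤ C ‖z₀‖_{H₀¹(0,L)}` for all `t ∈ [0,T]`. -/
theorem linearKdV_H1_bound (L : ℝ) (hL : 0 < L) :
    ∃ C > 0, ∀ z₀ : ℝ → ℝ, ContDiffOn ℝ 3 z₀ (Icc (0:ℝ) L) →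
      z₀ 0 = 0 → z₀ L = 0 → derivWithin z₀ (Icc (0:ℝ) L) L = 0 →
      ∀ T > 0, ∀ z : ℝ → ℝ → ℝ, IsLinearKdVSol L T z →
      (∀ x ∈ Icc (0:ℝ) L, z 0 x = z₀ x) →
      ∀ t ∈ Icc (0:ℝ) T, H1norm L (z t) ≤ C * H1norm L z₀ := by
  refine ⟨√(9 + 6 * L + 2 * L ^ 3), by positivity, ?_⟩
  intro z₀ _ _ _ _ T hT z hz hz₀ t ht
  have hflow := hz.flow hL hT
  rw [← H1norm.congr hL.le hz₀, H1norm.eq_sqrt_setIntegral hL.le,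
    H1norm.eq_sqrt_setIntegral hL.le, ← sqrt_mul (by positivity)]
  exact sqrt_le_sqrt (hflow.integral_sq_add_sq_le hL ht)
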